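/- Let P be a d-dimensional simplicial polytope that is a maximizer of the isotropic constant, i.e., L_P ≥ L_K for every d-dimensional convex body K. Then P is a simplex, i.e., the convex hull of d+1 affinely independent points. -/

import Mathlib

open MeasureTheory Finset
open scoped ProbabilityTheory
open scoped RealInnerProductSpace

noncomputable section

abbrev Euc (d : ℕ) := EuclideanSpace ℝ (Fin d)

section GeneralSpace

variable {V : Type*} [NormedAddCommGroup V] [NormedSpace ℝ V]

/-- The dimension of a set: the rank of the direction of its affine span. -/
noncomputable def sdim (F : Set V) : ℕ := Module.finrank ℝ (affineSpan ℝ F).direction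

/-- `F` is a simplex with `n` vertices (an `(n-1)`-dimensional simplex). -/
def IsSimplexWith (n : ℕ) (F : Set V) : Prop :=
  ∃ w : Fin n → V, AffineIndependent ℝ w ∧ F = convexHull ℝ (Set.range w)

/-- A polytope is the convex hull of finitely many points. -/
def IsPolytope (P : Set V) : Prop := ∃ S : Finset V, P = convexHull ℝ (S : Set V)

/-- A facet of a `d`-dimensional polytope: an exposed face of dimension `d - 1`. -/
def IsFacetOf (d : ℕ) (P F : Set V) : Prop := IsExposed ℝ P F ∧ sdim F = d - 1

/-- A `d`-dimensional simplicial polytope: a polytope of dimension `d`, each facet of which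
is a `(d-1)`-dimensional simplex (i.e. has `d` affinely independent vertices). -/
def IsSimplicialPolytope (d : ℕ) (P : Set V) : Prop :=
  IsPolytope P ∧ sdim P = d ∧ ∀ F : Set V, IsFacetOf d P F → IsSimplexWith d F

end GeneralSpace

/-- A convex body: compact, convex, with nonempty interior. -/
def IsConvexBody {d : ℕ} (K : Set (Euc d)) : Prop :=
  IsCompact K ∧ Convex ℝ K ∧ (interior K).Nonempty

/-- The barycenter `μ_K` of the uniform distribution on `K`. -/
noncomputable def centroid {d : ℕ} (K : Set (Euc d)) : Euc d :=
  (volume K).toReal⁻¹ • ∫ x in K, x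

/-- The covariance matrix `A(K)` of the uniform distribution on `K`. -/
noncomputable def covMatrix {d : ℕ} (K : Set (Euc d)) : Matrix (Fin d) (Fin d) ℝ :=
  Matrix.of fun i j =>
    (volume K).toReal⁻¹ * ∫ x in K, (x i - centroid K i) * (x j - centroid K j)

/-- The isotropic constant `L_K`, defined by `L_K ^ (2d) = det A(K) / vol(K) ^ 2`. -/
noncomputable def isoConst {d : ℕ} (K : Set (Euc d)) : ℝ :=
  ((covMatrix K).det / (volume K).toReal ^ 2) ^ ((2 * (d : ℝ))⁻¹)

/-- `K` is isotropic: its barycenter is the origin and its covariance matrix is the identity. -/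
def IsIsotropic {d : ℕ} (K : Set (Euc d)) : Prop :=
  centroid K = 0 ∧ covMatrix K = 1

/-- `P` is a local extremum (local maximum or local minimum) of `K ↦ L_K` among convex bodies,
with respect to the Hausdorff metric. -/
def IsLocalExtremumOfIsoConst {d : ℕ} (P : Set (Euc d)) : Prop :=
  (∃ ε > 0, ∀ K : Set (Euc d), IsConvexBody K →
      Metric.hausdorffDist K P < ε → isoConst K ≤ isoConst P) ∨
  (∃ ε > 0, ∀ K : Set (Euc d), IsConvexBody K →
      Metric.hausdorffDist K P < ε → isoConst P ≤ isoConst K)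

/-- The polar angle of `(a, b) ∈ ℝ²`, normalized to lie in `[-π, π)`. -/
noncomputable def polarAngle (a b : ℝ) : ℝ :=
  if Complex.arg ⟨a, b⟩ = Real.pi then -Real.pi else Complex.arg ⟨a, b⟩

/-!
Move the maximizer `P` to isotropic position. Gluing a thin simplex with base a facet `F` and apex
near a point `y` of `F` onto `P` must not increase `L_P`. To first order this says that the mean of
`‖x‖ ^ 2` over the degenerate simplex with vertices `F` and `y` is at most `d + 2`; by continuity
`y` may be any vertex `k` of `F`. Summing over `k` bounds the mean of `‖x‖ ^ 2` over the cone
`conv (F ∪ {0})` by `d`, while its mean over `P`, the union of these cones, is exactly `d`. So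
equality holds throughout: `⟪k, ∑ v ∈ F, v⟫ + ‖k‖ ^ 2 = (d + 1) * (d + 2)` for every vertex `k` of
every facet `F`.

Compare these equations for the two facets through a ridge `F ∖ {r}`: the two remaining vertices
have equal norms and equal inner products with the ridge, so they are mirror images of each other in
the hyperplane spanned by the ridge. A facet thus determines its neighbours, and walking from facet
to facet one finds that `P` is invariant under all these reflections.

Let `n` be a unit normal of such a mirror. The chord of `P` through `x ∈ P` in direction `n` is
symmetric about the mirror, of half-length `h x` say. With `v = Cov(h, X)`, orthogonal to `n` by
symmetry, the shear `x ↦ x + (h x - ⟪v, x⟫) n` maps `P` onto a linear image of the half of `P` in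
front of the mirror. The result is a convex body with the volume of `P` and with covariance matrix
`1 + Var(h - ⟪v, ·⟫) n nᵀ`, so by maximality `h` is affine on `P`. Hence the vertices of `P` in
front of the mirror lie in `F` and those behind it in the mirror image of `F`: `P` is the convex
hull of `F` and the mirror image of `r`.
-/
section Layers

open Real in
/-- Writing `exp (-u)` as the integral of `exp (-s)` over `s ≥ u`, slice by the sublevels of `u`. -/
theorem lintegral_mul_exp_neg {α : Type*} [MeasurableSpace α] (μ : Measure α) [SFinite μ]
    {f : α → ENNReal} {u : α → ℝ} (hf : Measurable f) (hu : Measurable u) :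
    ∫⁻ x, f x * ENNReal.ofReal (exp (-u x)) ∂μ
      = ∫⁻ s, (∫⁻ x in {x | u x ≤ s}, f x ∂μ) * ENNReal.ofReal (exp (-s)) := by
  have h_tail (a : ℝ) :
      ∫⁻ s in Set.Ici a, ENNReal.ofReal (exp (-s)) = ENNReal.ofReal (exp (-a)) := by
    rw [Measure.restrict_congr_set Ioi_ae_eq_Ici.symm, ← integral_exp_neg_Ioi,
      ofReal_integral_eq_lintegral_ofReal (integrableOn_exp_neg_Ioi a)]
    exact .of_forall fun s => (exp_pos _).le
  have h_left (x : α) : f x * ENNReal.ofReal (exp (-u x))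
      = ∫⁻ s, {p : α × ℝ | u p.1 ≤ p.2}.indicator
          (fun p => f p.1 * ENNReal.ofReal (exp (-p.2))) (x, s) := by
    rw [← h_tail, ← lintegral_const_mul _ (by fun_prop), ← lintegral_indicator measurableSet_Ici]
    rfl
  have h_right (s : ℝ) : (∫⁻ x in {x | u x ≤ s}, f x ∂μ) * ENNReal.ofReal (exp (-s))
      = ∫⁻ x, {p : α × ℝ | u p.1 ≤ p.2}.indicator
          (fun p => f p.1 * ENNReal.ofReal (exp (-p.2))) (x, s) ∂μ := by
    rw [← lintegral_mul_const _ hf, ← lintegral_indicator (measurableSet_le hu measurable_const)]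
    rfl
  simp_rw [h_left, h_right]
  refine lintegral_lintegral_swap (Measurable.aemeasurable (Measurable.indicator ?_ ?_))
  · exact (hf.comp measurable_fst).mul (by fun_prop)
  · exact measurableSet_le (hu.comp measurable_fst) measurable_snd

variable {E : Type*} [NormedAddCommGroup E] [NormedSpace ℝ E] [FiniteDimensional ℝ E]
  [MeasurableSpace E] [BorelSpace E] (μ : Measure E) [μ.IsAddHaarMeasure]
  {f : E → ENNReal} {u : E → ℝ} {k : ℕ}

theorem setLIntegral_sublevel_of_homogeneous (hf : Measurable f) (hu : Measurable u)
    (hfk : ∀ ⦃s : ℝ⦄, 0 < s → ∀ x, f (s • x) = ENNReal.ofReal (s ^ k) * f x)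
    (hu1 : ∀ ⦃s : ℝ⦄, 0 < s → ∀ x, u (s • x) = s * u x) {s : ℝ} (hs : 0 < s) :
    ∫⁻ x in {x | u x ≤ s}, f x ∂μ
      = ENNReal.ofReal (s ^ (Module.finrank ℝ E + k)) * ∫⁻ x in {x | u x ≤ 1}, f x ∂μ := by
  have h_preimage : (s • ·) ⁻¹' {x : E | u x ≤ s} = {x | u x ≤ 1} := by
    ext x
    simp only [Set.mem_preimage, Set.mem_ofPred_eq, hu1 hs]
    exact mul_le_iff_le_one_right hs
  have h_map := setLIntegral_map (μ := μ) (measurableSet_le hu (measurable_const (a := s))) hf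
    (measurable_const_smul s)
  rw [h_preimage, Measure.map_addHaar_smul μ hs.ne', Measure.restrict_smul,
    lintegral_smul_measure, smul_eq_mul] at h_map
  simp_rw [hfk hs] at h_map
  rw [lintegral_const_mul _ hf] at h_map
  rw [pow_add, ENNReal.ofReal_mul (by positivity), mul_assoc, ← h_map, ← mul_assoc,
    ← ENNReal.ofReal_mul (by positivity), abs_of_pos (by positivity),
    mul_inv_cancel₀ (by positivity), ENNReal.ofReal_one, one_mul]

open Real in
theorem integrableOn_exp_neg_mul_pow (n : ℕ) :
    IntegrableOn (fun s : ℝ => exp (-s) * s ^ n) (Set.Ioi 0) :=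
  (GammaIntegral_convergent (s := n + 1) (by positivity)).congr_fun
    (fun s _ => by simp [rpow_natCast]) measurableSet_Ioi

open Real in
theorem integral_exp_neg_mul_pow (n : ℕ) :
    ∫ s in Set.Ioi (0 : ℝ), exp (-s) * s ^ n = (n.factorial : ℝ) := by
  rw [← Gamma_nat_eq_factorial, Gamma_eq_integral (by positivity)]
  exact setIntegral_congr_fun measurableSet_Ioi fun s _ => by simp [rpow_natCast]

open Real in
theorem lintegral_exp_neg_mul_pow (n : ℕ) :
    ∫⁻ s in Set.Ioi (0 : ℝ), ENNReal.ofReal (exp (-s) * s ^ n) = (n.factorial : ENNReal) := by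
  rw [← ENNReal.ofReal_natCast, ← integral_exp_neg_mul_pow, ofReal_integral_eq_lintegral_ofReal
    (integrableOn_exp_neg_mul_pow n)]
  refine (ae_restrict_iff' measurableSet_Ioi).2 (.of_forall fun s (hs : 0 < s) => ?_)
  positivity

open Real in
theorem lintegral_mul_exp_neg_of_homogeneous (hf : Measurable f) (hu : Measurable u)
    (hfk : ∀ ⦃s : ℝ⦄, 0 < s → ∀ x, f (s • x) = ENNReal.ofReal (s ^ k) * f x)
    (hu1 : ∀ ⦃s : ℝ⦄, 0 < s → ∀ x, u (s • x) = s * u x) (hneg : ∀ x, u x < 0 → f x = 0) :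
    ∫⁻ x, f x * ENNReal.ofReal (exp (-u x)) ∂μ
      = (Module.finrank ℝ E + k).factorial * ∫⁻ x in {x | u x ≤ 1}, f x ∂μ := by
  have h_slice : ∀ᵐ s : ℝ, (∫⁻ x in {x | u x ≤ s}, f x ∂μ) * ENNReal.ofReal (exp (-s))
      = (Set.Ioi (0 : ℝ)).indicator (fun s =>
          ENNReal.ofReal (exp (-s) * s ^ (Module.finrank ℝ E + k))
            * ∫⁻ x in {x | u x ≤ 1}, f x ∂μ) s := by
    filter_upwards [Measure.ae_ne volume (0 : ℝ)] with s hs0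
    rcases lt_or_gt_of_ne hs0 with hs | hs
    · rw [Set.indicator_of_notMem (by simpa using hs.le), setLIntegral_congr_fun
        (measurableSet_le hu measurable_const) fun x hx => hneg x (lt_of_le_of_lt hx hs)]
      simp
    · rw [Set.indicator_of_mem (Set.mem_Ioi.2 hs),
        setLIntegral_sublevel_of_homogeneous μ hf hu hfk hu1 hs, ENNReal.ofReal_mul (exp_pos _).le]
      ring
  rw [lintegral_mul_exp_neg μ hf hu, lintegral_congr_ae h_slice,
    lintegral_indicator measurableSet_Ioi, lintegral_mul_const _ (by fun_prop),
    lintegral_exp_neg_mul_pow]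

end Layers

section Dirichlet
variable {ι : Type*} [Fintype ι]

/-- The standard solid simplex `{x ≥ 0, ∑ x ≤ 1}`. -/
def solidSimplex (ι : Type*) [Fintype ι] : Set (ι → ℝ) :=
  {x | (∀ i, 0 ≤ x i) ∧ ∑ i, x i ≤ 1}

theorem isCompact_solidSimplex (ι : Type*) [Fintype ι] : IsCompact (solidSimplex ι) := by
  have h_eq : solidSimplex ι = (⋂ i, {x : ι → ℝ | 0 ≤ x i}) ∩ {x | ∑ i, x i ≤ 1} := by
    ext x; simp [solidSimplex]
  have h_closed : IsClosed (solidSimplex ι) := h_eq ▸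
    (isClosed_iInter fun i => isClosed_le (by fun_prop) (by fun_prop)).inter
      (isClosed_le (by fun_prop) (by fun_prop))
  refine Metric.isCompact_of_isClosed_isBounded h_closed
    ((isCompact_univ_pi fun _ : ι => isCompact_Icc (a := (0 : ℝ)) (b := 1)).isBounded.subset ?_)
  exact fun x hx i _ =>
    ⟨hx.1 i, (Finset.single_le_sum (fun j _ => hx.1 j) (mem_univ i)).trans hx.2⟩

/-- The monomial with exponents `m`, cut off to the open positive orthant so that it is
nonnegative and a product over the coordinates. -/
def orthantMonomial (m : ι → ℕ) (x : ι → ℝ) : ℝ :=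
  ∏ i, (Set.Ioi (0 : ℝ)).indicator (fun y => y ^ m i) (x i)

theorem orthantMonomial_nonneg (m : ι → ℕ) (x : ι → ℝ) : 0 ≤ orthantMonomial m x :=
  Finset.prod_nonneg fun i _ => Set.indicator_nonneg (fun y (hy : 0 < y) => by positivity) _

theorem measurable_orthantMonomial (m : ι → ℕ) : Measurable (orthantMonomial m) := by
  refine Finset.measurable_prod _ fun i _ => ?_
  exact (Measurable.indicator (by fun_prop) measurableSet_Ioi).comp (measurable_pi_apply i)

theorem orthantMonomial_eq_zero (m : ι → ℕ) {x : ι → ℝ} {i : ι} (hi : x i ≤ 0) :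
    orthantMonomial m x = 0 :=
  Finset.prod_eq_zero (mem_univ i) (Set.indicator_of_notMem (by simpa using hi) _)

theorem orthantMonomial_of_pos (m : ι → ℕ) {x : ι → ℝ} (hx : ∀ i, 0 < x i) :
    orthantMonomial m x = ∏ i, x i ^ m i :=
  Finset.prod_congr rfl fun i _ => Set.indicator_of_mem (Set.mem_Ioi.2 (hx i)) _

theorem orthantMonomial_smul (m : ι → ℕ) {s : ℝ} (hs : 0 < s) (x : ι → ℝ) :
    orthantMonomial m (s • x) = s ^ (∑ i, m i) * orthantMonomial m x := by
  by_cases hx : ∀ i, 0 < x i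
  · rw [orthantMonomial_of_pos m hx,
      orthantMonomial_of_pos m (x := s • x) fun i => mul_pos hs (hx i),
      ← Finset.prod_pow_eq_pow_sum, ← Finset.prod_mul_distrib]
    simp [mul_pow]
  · obtain ⟨i, hi⟩ := not_forall.1 hx
    rw [orthantMonomial_eq_zero m (not_lt.1 hi), mul_zero, orthantMonomial_eq_zero m
      (mul_nonpos_of_nonneg_of_nonpos hs.le (not_lt.1 hi) : (s • x) i ≤ 0)]

theorem lintegral_orthantMonomial_mul_exp (m : ι → ℕ) :
    ∫⁻ x : ι → ℝ, ENNReal.ofReal (orthantMonomial m x) * ENNReal.ofReal (Real.exp (-∑ i, x i))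
      = (∏ i, (m i).factorial : ℕ) := by
  let f (i : ι) : ℝ → ℝ := (Set.Ioi (0 : ℝ)).indicator fun s => Real.exp (-s) * s ^ m i
  have h_nonneg (i : ι) (s : ℝ) : 0 ≤ f i s :=
    Set.indicator_nonneg (fun y (hy : 0 < y) => by positivity) _
  have h_prod (x : ι → ℝ) :
      orthantMonomial m x * Real.exp (-∑ i, x i) = ∏ i, f i (x i) := by
    rw [← Finset.sum_neg_distrib, Real.exp_sum, orthantMonomial, ← Finset.prod_mul_distrib]
    refine Finset.prod_congr rfl fun i _ => ?_
    by_cases h : x i ∈ Set.Ioi 0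
    · simp only [f, Set.indicator_of_mem h, mul_comm]
    · simp only [f, Set.indicator_of_notMem h, zero_mul]
  have hf (i : ι) : Integrable (f i) :=
    (integrable_indicator_iff measurableSet_Ioi).2 (integrableOn_exp_neg_mul_pow _)
  have h_int : Integrable fun x : ι → ℝ => ∏ i, f i (x i) := Integrable.fintype_prod hf
  simp_rw [← ENNReal.ofReal_mul (orthantMonomial_nonneg m _), h_prod]
  rw [← ofReal_integral_eq_lintegral_ofReal h_int
    (.of_forall fun x => Finset.prod_nonneg fun i _ => h_nonneg i _),
    integral_fintype_prod_volume_eq_prod, Finset.prod_congr rfl fun i _ =>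
      (integral_indicator measurableSet_Ioi).trans (integral_exp_neg_mul_pow (m i)),
    ← Nat.cast_prod, ENNReal.ofReal_natCast]

theorem lintegral_orthantMonomial (m : ι → ℕ) :
    ∫⁻ x in {x : ι → ℝ | ∑ i, x i ≤ 1}, ENNReal.ofReal (orthantMonomial m x)
      = (∏ i, (m i).factorial : ℕ) / (Fintype.card ι + ∑ i, m i).factorial := by
  have h := lintegral_mul_exp_neg_of_homogeneous (E := ι → ℝ) volume (u := fun x => ∑ i, x i)
    (measurable_orthantMonomial m).ennreal_ofReal (by fun_prop)
    (fun s hs x => by rw [orthantMonomial_smul m hs, ENNReal.ofReal_mul (by positivity)])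
    (fun s _ x => by simp [Finset.mul_sum])
    (fun x hx => by
      obtain ⟨i, -, hi⟩ := Finset.exists_lt_of_sum_lt (f := x) (g := fun _ => (0 : ℝ)) (s := univ)
        (by simpa using hx)
      rw [orthantMonomial_eq_zero m hi.le, ENNReal.ofReal_zero])
  rw [lintegral_orthantMonomial_mul_exp, Module.finrank_fintype_fun_eq_card] at h
  rw [h, mul_comm, ENNReal.mul_div_cancel_right]
  · exact_mod_cast (Nat.factorial_pos _).ne'
  · exact ENNReal.natCast_ne_top _

theorem integral_solidSimplex_prod_pow (m : ι → ℕ) :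
    ∫ x in solidSimplex ι, ∏ i, x i ^ m i
      = (∏ i, ((m i).factorial : ℝ)) / ((Fintype.card ι + ∑ i, m i).factorial : ℝ) := by
  have hS : MeasurableSet {x : ι → ℝ | ∑ i, x i ≤ 1} :=
    measurableSet_le (by fun_prop) (by fun_prop)
  have h_ae : ∀ᵐ x : ι → ℝ, (solidSimplex ι).indicator (fun x => ∏ i, x i ^ m i) x
      = {x : ι → ℝ | ∑ i, x i ≤ 1}.indicator (orthantMonomial m) x := by
    filter_upwards [ae_all_iff.2 fun i =>
      (Measure.tendsto_eval_ae_ae (μ := fun _ : ι => (volume : Measure ℝ)) (i := i)).eventually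
        (Measure.ae_ne volume (0 : ℝ))] with x hx
    by_cases h0 : ∀ i, 0 ≤ x i
    · have h_eq := orthantMonomial_of_pos m fun i => lt_of_le_of_ne (h0 i) (hx i).symm
      by_cases h : ∑ i, x i ≤ 1 <;> simp [Set.indicator, solidSimplex, h, h0, h_eq]
    · obtain ⟨i, hi⟩ := not_forall.1 h0
      simp [Set.indicator, solidSimplex, h0, orthantMonomial_eq_zero m (not_le.1 hi).le]
  rw [← integral_indicator (isCompact_solidSimplex ι).measurableSet, integral_congr_ae h_ae,
    integral_indicator hS, integral_eq_lintegral_of_nonneg_ae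
      (.of_forall (orthantMonomial_nonneg m)) (measurable_orthantMonomial m).aestronglyMeasurable,
    lintegral_orthantMonomial]
  simp

end Dirichlet

theorem continuous_repr {ι E : Type*} [Finite ι] [NormedAddCommGroup E] [NormedSpace ℝ E]
    (b : Module.Basis ι ℝ E) (i : ι) : Continuous fun x => b.repr x i := by
  have := Fintype.ofFinite ι
  exact (continuous_apply i).comp b.equivFunL.continuous

section ConeSimplex
variable {ι : Type*} [Fintype ι]

theorem measureReal_solidSimplex :
    volume.real (solidSimplex ι) = 1 / ((Fintype.card ι).factorial : ℝ) := by
  simpa using integral_solidSimplex_prod_pow (ι := ι) 0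

theorem integral_solidSimplex_apply (i : ι) :
    ∫ x in solidSimplex ι, x i
      = volume.real (solidSimplex ι) / ((Fintype.card ι : ℝ) + 1) := by
  classical
  have h_monomial (x : ι → ℝ) : ∏ j, x j ^ (Pi.single i 1 : ι → ℕ) j = x i := by
    rw [Finset.prod_eq_single i] <;> simp +contextual
  have h_factorial : ∏ j, (((Pi.single i 1 : ι → ℕ) j).factorial : ℝ) = 1 :=
    Finset.prod_eq_one fun j _ => by
      rcases eq_or_ne j i with rfl | h <;> simp [*]
  have h := integral_solidSimplex_prod_pow (ι := ι) (Pi.single i 1)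
  simp_rw [h_monomial, h_factorial] at h
  rw [h, measureReal_solidSimplex, Finset.sum_pi_single', if_pos (mem_univ i),
    Nat.factorial_succ]
  push_cast
  field_simp

theorem integral_solidSimplex_mul [DecidableEq ι] (i j : ι) :
    ∫ x in solidSimplex ι, x i * x j
      = volume.real (solidSimplex ι) * (1 + if i = j then 1 else 0)
        / (((Fintype.card ι : ℝ) + 1) * ((Fintype.card ι : ℝ) + 2)) := by
  have h_monomial (x : ι → ℝ) :
      ∏ k, x k ^ (Pi.single i 1 + Pi.single j 1 : ι → ℕ) k = x i * x j := by
    simp_rw [Pi.add_apply, pow_add, Finset.prod_mul_distrib]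
    rw [Finset.prod_eq_single i (by simp +contextual) (by simp),
      Finset.prod_eq_single j (by simp +contextual) (by simp)]
    simp
  have h_factorial : ∏ k, (((Pi.single i 1 + Pi.single j 1 : ι → ℕ) k).factorial : ℝ)
      = 1 + if i = j then 1 else 0 := by
    rw [Finset.prod_eq_single_of_mem i (mem_univ _)]
    · rcases eq_or_ne i j with rfl | h
      · simp; norm_num
      · simp [h]
    · intro k _ hk
      rcases eq_or_ne k j with rfl | h <;> simp [*]
  have h_degree : ∑ k, (Pi.single i 1 + Pi.single j 1 : ι → ℕ) k = 2 := by
    simp [Finset.sum_add_distrib, Finset.sum_pi_single']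
  have h := integral_solidSimplex_prod_pow (ι := ι) (Pi.single i 1 + Pi.single j 1)
  simp_rw [h_monomial] at h
  rw [h, h_factorial, h_degree, measureReal_solidSimplex, Nat.factorial_succ, Nat.factorial_succ]
  push_cast
  field_simp
  ring

variable {E : Type*} [NormedAddCommGroup E]

section Normed
variable [NormedSpace ℝ E]

/-- The simplex with vertices `0` and the vectors of the basis `b`, in coordinates. -/
def coneSimplex (b : Module.Basis ι ℝ E) : Set E :=
  {x | (∀ i, 0 ≤ b.repr x i) ∧ ∑ i, b.repr x i ≤ 1}

theorem coneSimplex_eq_preimage (b : Module.Basis ι ℝ E) :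
    coneSimplex b = b.equivFunL ⁻¹' solidSimplex ι := rfl

theorem isCompact_coneSimplex (b : Module.Basis ι ℝ E) : IsCompact (coneSimplex b) := by
  rw [coneSimplex_eq_preimage]
  exact b.equivFunL.toHomeomorph.isCompact_preimage.2 (isCompact_solidSimplex ι)

variable [MeasurableSpace E] [BorelSpace E] (μ : Measure E) [μ.IsAddHaarMeasure]

theorem integrableOn_coneSimplex (b : Module.Basis ι ℝ E) {g : E → ℝ} (hg : Continuous g) :
    IntegrableOn g (coneSimplex b) μ :=
  hg.continuousOn.integrableOn_compact (isCompact_coneSimplex b)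

theorem exists_integral_coneSimplex (b : Module.Basis ι ℝ E) :
    ∃ c : ℝ, 0 < c ∧ μ.real (coneSimplex b) = c * volume.real (solidSimplex ι) ∧
      ∀ g : (ι → ℝ) → ℝ,
        ∫ x in coneSimplex b, g (b.equivFunL x) ∂μ = c * ∫ y in solidSimplex ι, g y := by
  have h_haar : (μ.map b.equivFunL).IsAddHaarMeasure := b.equivFunL.isAddHaarMeasure_map μ
  obtain ⟨c, hc, h_map⟩ : ∃ c : NNReal, 0 < c ∧ μ.map b.equivFunL = c • volume :=
    ⟨_, Measure.addHaarScalarFactor_pos_of_isAddHaarMeasure _ _,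
      Measure.isAddLeftInvariant_eq_smul _ _⟩
  have h_emb : MeasurableEmbedding b.equivFunL := b.equivFunL.toHomeomorph.measurableEmbedding
  have h_int (g : (ι → ℝ) → ℝ) :
      ∫ x in coneSimplex b, g (b.equivFunL x) ∂μ = c * ∫ y in solidSimplex ι, g y := by
    rw [coneSimplex_eq_preimage, ← h_emb.setIntegral_map, h_map, Measure.restrict_smul,
      integral_smul_nnreal_measure]
    rfl
  exact ⟨c, hc, by simpa using h_int fun _ => 1, h_int⟩

theorem measureReal_coneSimplex_pos (b : Module.Basis ι ℝ E) : 0 < μ.real (coneSimplex b) := by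
  obtain ⟨c, hc, h, -⟩ := exists_integral_coneSimplex μ b
  rw [h, measureReal_solidSimplex]
  positivity

theorem integral_coneSimplex_repr (b : Module.Basis ι ℝ E) (i : ι) :
    ∫ x in coneSimplex b, b.repr x i ∂μ
      = μ.real (coneSimplex b) / ((Fintype.card ι : ℝ) + 1) := by
  obtain ⟨c, -, h, h_int⟩ := exists_integral_coneSimplex μ b
  rw [h, mul_div_assoc, ← integral_solidSimplex_apply i]
  exact h_int fun y => y i

theorem integral_coneSimplex_repr_mul [DecidableEq ι] (b : Module.Basis ι ℝ E) (i j : ι) :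
    ∫ x in coneSimplex b, b.repr x i * b.repr x j ∂μ
      = μ.real (coneSimplex b) * (1 + if i = j then 1 else 0)
        / (((Fintype.card ι : ℝ) + 1) * ((Fintype.card ι : ℝ) + 2)) := by
  obtain ⟨c, -, h, h_int⟩ := exists_integral_coneSimplex μ b
  rw [h, mul_assoc, mul_div_assoc, ← integral_solidSimplex_mul i j]
  exact h_int fun y => y i * y j

end Normed

variable [InnerProductSpace ℝ E]

theorem norm_sum_smul_sq (c : ι → ℝ) (p : ι → E) :
    ‖∑ i, c i • p i‖ ^ 2 = ∑ i, ∑ j, ⟪p i, p j⟫ * (c i * c j) := by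
  rw [← real_inner_self_eq_norm_sq, sum_inner]
  refine Finset.sum_congr rfl fun i _ => ?_
  rw [inner_sum]
  exact Finset.sum_congr rfl fun j _ => by
    rw [real_inner_smul_right, real_inner_smul_left]; ring

variable [MeasurableSpace E] [BorelSpace E] (μ : Measure E) [μ.IsAddHaarMeasure]

theorem integral_coneSimplex_inner (b : Module.Basis ι ℝ E) (q : E) (p : ι → E) :
    ∫ x in coneSimplex b, ⟪q, ∑ i, b.repr x i • p i⟫ ∂μ
      = μ.real (coneSimplex b) * ⟪q, ∑ i, p i⟫ / ((Fintype.card ι : ℝ) + 1) := by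
  have hc := continuous_repr b
  simp_rw [inner_sum, real_inner_smul_right]
  rw [integral_finsetSum _ fun i _ => integrableOn_coneSimplex μ b (by fun_prop)]
  simp_rw [integral_mul_const, integral_coneSimplex_repr μ, Finset.mul_sum, Finset.sum_div]
  exact Finset.sum_congr rfl fun i _ => by ring

theorem integral_coneSimplex_norm_sq (b : Module.Basis ι ℝ E) (p : ι → E) :
    ∫ x in coneSimplex b, ‖∑ i, b.repr x i • p i‖ ^ 2 ∂μ
      = μ.real (coneSimplex b) * (‖∑ i, p i‖ ^ 2 + ∑ i, ‖p i‖ ^ 2)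
          / (((Fintype.card ι : ℝ) + 1) * ((Fintype.card ι : ℝ) + 2)) := by
  classical
  have hc := continuous_repr b
  have h_norm : ‖∑ i, p i‖ ^ 2 + ∑ i, ‖p i‖ ^ 2
      = ∑ i, ∑ j, ⟪p i, p j⟫ * (1 + if i = j then 1 else 0) := by
    have h := norm_sum_smul_sq (fun _ => 1) p
    simp only [one_smul, mul_one] at h
    simp [h, mul_add, Finset.sum_add_distrib]
  simp_rw [norm_sum_smul_sq]
  rw [integral_finsetSum _ fun i _ => integrableOn_coneSimplex μ b (by fun_prop), h_norm,
    Finset.mul_sum, Finset.sum_div]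
  refine Finset.sum_congr rfl fun i _ => ?_
  rw [integral_finsetSum _ fun j _ => integrableOn_coneSimplex μ b (by fun_prop),
    Finset.mul_sum, Finset.sum_div]
  refine Finset.sum_congr rfl fun j _ => ?_
  rw [integral_const_mul, integral_coneSimplex_repr_mul]
  ring

/-- `x ↦ q + ∑ i, b.repr x i • (p i - q)` maps `coneSimplex b` affinely onto the simplex with
vertices `q` and `p i`. -/
theorem integral_coneSimplex_norm_add_sq (b : Module.Basis ι ℝ E) (q : E) (p : ι → E) :
    ∫ x in coneSimplex b, ‖q + ∑ i, b.repr x i • (p i - q)‖ ^ 2 ∂μ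
      = μ.real (coneSimplex b) * (‖q + ∑ i, p i‖ ^ 2 + (‖q‖ ^ 2 + ∑ i, ‖p i‖ ^ 2))
          / (((Fintype.card ι : ℝ) + 1) * ((Fintype.card ι : ℝ) + 2)) := by
  have hc := continuous_repr b
  simp_rw [norm_add_sq_real q]
  rw [integral_add (integrableOn_coneSimplex μ b (by fun_prop))
      (integrableOn_coneSimplex μ b (by fun_prop)),
    integral_add (integrableOn_coneSimplex μ b (by fun_prop))
      (integrableOn_coneSimplex μ b (by fun_prop)), integral_const_mul,
    integral_coneSimplex_norm_sq, integral_coneSimplex_inner]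
  simp only [integral_const, measureReal_restrict_apply_univ, Finset.sum_sub_distrib,
    Finset.sum_const, card_univ, norm_sub_sq_real, inner_sub_right, smul_eq_mul,
    ← Nat.cast_smul_eq_nsmul ℝ, Finset.sum_add_distrib, ← Finset.mul_sum, ← inner_sum,
    real_inner_smul_right, norm_smul, real_inner_self_eq_norm_sq, real_inner_comm q,
    Real.norm_natCast, mul_pow]
  field_simp
  ring

end ConeSimplex

section Uniform

open ProbabilityTheory

variable {X : Type*} [MeasurableSpace X] {μ : Measure X} {K D : Set X}

theorem integral_cond_eq (K : Set X) (g : X → ℝ) :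
    ∫ x, g x ∂μ[|K] = (μ.real K)⁻¹ * ∫ x in K, g x ∂μ := by
  rw [ProbabilityTheory.cond, integral_smul_measure, ENNReal.toReal_inv, smul_eq_mul, Measure.real]

theorem memLp_cond_of_isCompact [TopologicalSpace X] [T2Space X] [BorelSpace X]
    (hK : IsCompact K) {g : X → ℝ} (hg : Continuous g) (p : ENNReal) : MemLp g p μ[|K] := by
  obtain ⟨C, hC⟩ := hK.exists_bound_of_continuousOn hg.continuousOn
  exact MemLp.of_bound hg.aestronglyMeasurable C
    ((ae_cond_mem hK.measurableSet).mono hC)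

theorem integral_cond_union {g : X → ℝ} (hK : IntegrableOn g K μ) (hD : IntegrableOn g D μ)
    (hD_meas : MeasurableSet D) (h_disj : μ (K ∩ D) = 0) (hK0 : 0 < μ.real K)
    (hD0 : 0 < μ.real D) :
    ∫ x, g x ∂μ[|K ∪ D]
      = (1 - μ.real D / (μ.real K + μ.real D)) * ∫ x, g x ∂μ[|K]
        + μ.real D / (μ.real K + μ.real D) * ∫ x, g x ∂μ[|D] := by
  have hK_top : μ K ≠ ⊤ := fun h => hK0.ne' (by simp [Measure.real, h])
  have hD_top : μ D ≠ ⊤ := fun h => hD0.ne' (by simp [Measure.real, h])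
  rw [integral_cond_eq, integral_cond_eq, integral_cond_eq,
    measureReal_union₀ hD_meas.nullMeasurableSet h_disj,
    setIntegral_union₀ h_disj hD_meas.nullMeasurableSet hK hD]
  field_simp
  ring

variable {E : Type*} [NormedAddCommGroup E] [NormedSpace ℝ E]
  [MeasurableSpace E] [BorelSpace E] (ν : Measure E) [ν.IsAddHaarMeasure]

theorem measure_image_affine [FiniteDimensional ℝ E] (f : E ≃L[ℝ] E) (t : E) (K : Set E) :
    ν ((fun x => f x + t) '' K)
      = ENNReal.ofReal |LinearMap.det (f : E →ₗ[ℝ] E)| * ν K := by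
  rw [← Measure.addHaar_image_continuousLinearEquiv, ← Set.image_image (· + t), Set.image_add_right,
    measure_preimage_add_right]

omit [MeasurableSpace E] [BorelSpace E] in
theorem ofReal_abs_det_ne_zero (f : E ≃L[ℝ] E) :
    ENNReal.ofReal |LinearMap.det (f : E →ₗ[ℝ] E)| ≠ 0 := by
  simpa using (LinearEquiv.isUnit_det' f.toLinearEquiv).ne_zero

theorem cond_image_affine [FiniteDimensional ℝ E] (f : E ≃L[ℝ] E) (t : E) {K : Set E}
    (hK : IsCompact K) :
    ν[|(fun x => f x + t) '' K] = (ν[|K]).map fun x => f x + t := by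
  have hf : Continuous fun x => f x + t := by fun_prop
  ext S hS
  rw [Measure.map_apply hf.measurable hS, cond_apply (hK.image hf).measurableSet,
    cond_apply hK.measurableSet, ← Set.image_inter_preimage, measure_image_affine,
    measure_image_affine, mul_comm, ← div_eq_mul_inv, ENNReal.mul_div_mul_left _ _
      (ofReal_abs_det_ne_zero f) ENNReal.ofReal_ne_top, div_eq_mul_inv, mul_comm]

omit [NormedSpace ℝ E] [BorelSpace E] in
theorem absolutelyContinuous_restrict_cond {K : Set E} (hK : IsCompact K) :
    ν.restrict K ≪ ν[|K] :=
  Measure.AbsolutelyContinuous.smul_right Measure.AbsolutelyContinuous.rfl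
    (ENNReal.inv_ne_zero.2 hK.measure_lt_top.ne)

theorem variance_cond_pos {K : Set E} (hK : IsCompact K) (h_int : (interior K).Nonempty)
    {L : E →L[ℝ] ℝ} (hL : L ≠ 0) : 0 < Var[L; ν[|K]] := by
  refine (variance_nonneg L _).lt_of_ne' fun h0 => ?_
  have h_const : Set.EqOn L (fun _ => ∫ x, L x ∂ν[|K]) (interior K) :=
    Measure.eqOn_open_of_ae_eq (ae_restrict_of_ae_restrict_of_subset interior_subset
      ((absolutelyContinuous_restrict_cond ν hK).ae_le (ae_eq_integral_of_variance_eq_zero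
        (memLp_cond_of_isCompact hK L.continuous 2) h0)))
      isOpen_interior L.continuous.continuousOn continuousOn_const
  have h_open := L.isOpenMap_of_ne_zero hL _ (isOpen_interior (s := K))
  rw [h_const.image_eq, h_int.image_const] at h_open
  exact not_isOpen_singleton _ h_open

end Uniform

section Covariance

open ProbabilityTheory

variable {d : ℕ} {K : Set (Euc d)}

theorem IsConvexBody.measureReal_pos (hK : IsConvexBody K) : 0 < volume.real K :=
  ENNReal.toReal_pos (Measure.measure_pos_of_nonempty_interior volume hK.2.2).ne'
    hK.1.measure_lt_top.ne

theorem isProbabilityMeasure_cond_of_isCompact (hK : IsCompact K) (h0 : 0 < volume.real K) :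
    IsProbabilityMeasure (volume[|K]) :=
  cond_isProbabilityMeasure_of_finite (fun h => h0.ne' (by simp [Measure.real, h]))
    hK.measure_lt_top.ne

theorem continuous_euc_apply (i : Fin d) : Continuous fun x : Euc d => x i :=
  (EuclideanSpace.proj (𝕜 := ℝ) i).continuous

theorem centroid_apply (hK : IsCompact K) (i : Fin d) :
    centroid K i = ∫ x, x i ∂volume[|K] := by
  have h_int : IntegrableOn (fun x : Euc d => x) K :=
    continuous_id.continuousOn.integrableOn_compact hK
  have h_comm : ∫ x in K, x i = (∫ x in K, x) i :=
    (EuclideanSpace.proj (𝕜 := ℝ) i).integral_comp_comm h_int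
  rw [integral_cond_eq, h_comm]
  simp [_root_.centroid, Measure.real]

theorem covMatrix_apply (hK : IsCompact K) (i j : Fin d) :
    covMatrix K i j = cov[fun x => x i, fun x => x j; volume[|K]] := by
  rw [covariance, ← centroid_apply hK, ← centroid_apply hK, integral_cond_eq]
  rfl

theorem memLp_euc_apply (hK : IsCompact K) (i : Fin d) (p : ENNReal) :
    MemLp (fun x : Euc d => x i) p (volume[|K]) :=
  memLp_cond_of_isCompact hK (continuous_euc_apply i) p

theorem covMatrix_apply_eq_sub (hK : IsCompact K) (h0 : 0 < volume.real K) (i j : Fin d) :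
    covMatrix K i j
      = ∫ x, x i * x j ∂volume[|K] - (∫ x, x i ∂volume[|K]) * ∫ x, x j ∂volume[|K] := by
  have := isProbabilityMeasure_cond_of_isCompact hK h0
  rw [covMatrix_apply hK, covariance_eq_sub (memLp_euc_apply hK i 2) (memLp_euc_apply hK j 2)]
  rfl

/-- The matrix of a linear automorphism in the standard basis. -/
def stdMatrix (f : Euc d ≃L[ℝ] Euc d) : Matrix (Fin d) (Fin d) ℝ :=
  LinearMap.toMatrix (EuclideanSpace.basisFun (Fin d) ℝ).toBasis
    (EuclideanSpace.basisFun (Fin d) ℝ).toBasis (f : Euc d →ₗ[ℝ] Euc d)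

theorem det_stdMatrix (f : Euc d ≃L[ℝ] Euc d) :
    (stdMatrix f).det = LinearMap.det (f : Euc d →ₗ[ℝ] Euc d) :=
  LinearMap.det_toMatrix _ _

theorem apply_eq_sum_stdMatrix (f : Euc d ≃L[ℝ] Euc d) (x : Euc d) (i : Fin d) :
    f x i = ∑ j, stdMatrix f i j * x j := by
  have h := congrFun (LinearMap.toMatrix_mulVec_repr (EuclideanSpace.basisFun (Fin d) ℝ).toBasis
    (EuclideanSpace.basisFun (Fin d) ℝ).toBasis (f : Euc d →ₗ[ℝ] Euc d) x) i
  simpa [Matrix.mulVec, dotProduct, stdMatrix] using h.symm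

theorem exists_stdMatrix_eq {M : Matrix (Fin d) (Fin d) ℝ} (hM : IsUnit M.det) :
    ∃ f : Euc d ≃L[ℝ] Euc d, stdMatrix f = M :=
  ⟨(Matrix.toLinearEquiv (EuclideanSpace.basisFun (Fin d) ℝ).toBasis M
    hM).toContinuousLinearEquiv, LinearMap.toMatrix_toLin _ _ M⟩

theorem centroid_image_affine (hK : IsCompact K) (h0 : 0 < volume.real K)
    (f : Euc d ≃L[ℝ] Euc d) (t : Euc d) :
    centroid ((fun x => f x + t) '' K) = f (centroid K) + t := by
  have := isProbabilityMeasure_cond_of_isCompact hK h0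
  have hf : Continuous fun x => f x + t := by fun_prop
  have h_int (k : Fin d) : Integrable (fun x : Euc d => x k) (volume[|K]) :=
    memLp_one_iff_integrable.1 (memLp_euc_apply hK k 1)
  ext i
  rw [centroid_apply (hK.image hf), cond_image_affine _ _ _ hK, integral_map
    hf.aemeasurable (continuous_euc_apply i).aestronglyMeasurable]
  simp_rw [PiLp.add_apply, apply_eq_sum_stdMatrix, centroid_apply hK]
  rw [integral_add (integrable_finsetSum _ fun k _ => (h_int k).const_mul _)
    (integrable_const _), integral_finsetSum _ fun k _ => (h_int k).const_mul _]
  simp [integral_const_mul]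

theorem covMatrix_image_affine (hK : IsCompact K) (h0 : 0 < volume.real K)
    (f : Euc d ≃L[ℝ] Euc d) (t : Euc d) :
    covMatrix ((fun x => f x + t) '' K) = stdMatrix f * covMatrix K * (stdMatrix f).transpose := by
  have := isProbabilityMeasure_cond_of_isCompact hK h0
  have hf : Continuous fun x => f x + t := by fun_prop
  have h_mem (i k : Fin d) : MemLp (fun x : Euc d => stdMatrix f i k * x k) 2 (volume[|K]) :=
    (memLp_euc_apply hK k 2).const_mul _
  have h_int (i : Fin d) :
      Integrable (fun x : Euc d => ∑ k, stdMatrix f i k * x k) (volume[|K]) :=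
    integrable_finsetSum _ fun k _ => (h_mem i k).integrable one_le_two
  ext i j
  rw [covMatrix_apply (hK.image hf), cond_image_affine _ _ _ hK, covariance_map_fun
    (continuous_euc_apply i).aestronglyMeasurable (continuous_euc_apply j).aestronglyMeasurable
    hf.aemeasurable]
  simp_rw [PiLp.add_apply, apply_eq_sum_stdMatrix, Matrix.mul_apply, Finset.sum_mul,
    Matrix.transpose_apply, covMatrix_apply hK]
  rw [covariance_add_const_left (h_int i), covariance_add_const_right (h_int j),
    covariance_fun_sum_fun_sum (h_mem i) (h_mem j), Finset.sum_comm]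
  simp_rw [covariance_const_mul_left, covariance_const_mul_right]
  exact Finset.sum_congr rfl fun _ _ => Finset.sum_congr rfl fun _ _ => by ring

theorem det_covMatrix_div_image_affine (hK : IsCompact K) (h0 : 0 < volume.real K)
    (f : Euc d ≃L[ℝ] Euc d) (t : Euc d) :
    (covMatrix ((fun x => f x + t) '' K)).det / volume.real ((fun x => f x + t) '' K) ^ 2
      = (covMatrix K).det / volume.real K ^ 2 := by
  have h_det : LinearMap.det (f : Euc d →ₗ[ℝ] Euc d) ≠ 0 :=
    (LinearEquiv.isUnit_det' f.toLinearEquiv).ne_zero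
  rw [covMatrix_image_affine hK h0, Matrix.det_mul, Matrix.det_mul, Matrix.det_transpose,
    det_stdMatrix, Measure.real, measure_image_affine, ENNReal.toReal_mul,
    ENNReal.toReal_ofReal (abs_nonneg _), mul_pow, sq_abs, ← Measure.real]
  field_simp

theorem IsConvexBody.image_affine (hK : IsConvexBody K)
    (f : Euc d ≃L[ℝ] Euc d) (t : Euc d) : IsConvexBody ((fun x => f x + t) '' K) := by
  have h_comp : (fun x => f x + t) '' K = Homeomorph.addRight t '' (f.toHomeomorph '' K) := by
    rw [Set.image_image]; rfl
  refine ⟨hK.1.image (by fun_prop), ?_, ?_⟩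
  · rw [← Set.image_image (· + t)]
    simpa [add_comm] using (hK.2.1.linear_image (f : Euc d →ₗ[ℝ] Euc d)).translate t
  · rw [h_comp, ← Homeomorph.image_interior, ← Homeomorph.image_interior]
    exact (hK.2.2.image _).image _

theorem dotProduct_covMatrix_mulVec (hK : IsCompact K) (a : Fin d → ℝ) :
    a ⬝ᵥ (covMatrix K).mulVec a = Var[fun x => ∑ i, a i * x i; volume[|K]] := by
  have h_mem (i : Fin d) : MemLp (fun x : Euc d => a i * x i) 2 (volume[|K]) :=
    (memLp_euc_apply hK i 2).const_mul _
  rw [← covariance_self (by fun_prop), covariance_fun_sum_fun_sum h_mem h_mem]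
  simp_rw [covariance_const_mul_left, covariance_const_mul_right, dotProduct, Matrix.mulVec,
    dotProduct, Finset.mul_sum, covMatrix_apply hK]
  exact Finset.sum_congr rfl fun _ _ => Finset.sum_congr rfl fun _ _ => by ring

theorem isHermitian_covMatrix (K : Set (Euc d)) : (covMatrix K).IsHermitian := by
  ext i j
  simp [covMatrix, mul_comm]

theorem posSemidef_covMatrix (hK : IsCompact K) : (covMatrix K).PosSemidef :=
  .of_dotProduct_mulVec_nonneg (isHermitian_covMatrix K) fun a => by
    rw [star_trivial, dotProduct_covMatrix_mulVec hK]
    exact variance_nonneg _ _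

theorem posDef_covMatrix (hK : IsConvexBody K) : (covMatrix K).PosDef :=
  .of_dotProduct_mulVec_pos (isHermitian_covMatrix K) fun a ha => by
    rw [star_trivial, dotProduct_covMatrix_mulVec hK.1]
    let L : Euc d →L[ℝ] ℝ := ∑ i, a i • EuclideanSpace.proj (𝕜 := ℝ) i
    have hL : L ≠ 0 := fun h => ha <| funext fun i => by
      simpa [L, Finset.sum_apply] using DFunLike.congr_fun h (EuclideanSpace.single i 1)
    have hL_coe : (fun x : Euc d => ∑ i, a i * x i) = L := by
      funext x
      simp [L]
    rw [hL_coe]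
    exact variance_cond_pos volume hK.1 hK.2.2 hL

open scoped MatrixOrder in
theorem exists_isIsotropic_image (hK : IsConvexBody K) :
    ∃ (f : Euc d ≃L[ℝ] Euc d) (t : Euc d), IsIsotropic ((fun x => f x + t) '' K) := by
  have hA := posDef_covMatrix hK
  obtain ⟨B, hB⟩ : ∃ B : Matrix (Fin d) (Fin d) ℝ, covMatrix K = B.transpose * B :=
    CStarAlgebra.nonneg_iff_eq_star_mul_self.mp hA.posSemidef.nonneg
  have hB_det : B.det ≠ 0 := fun h => hA.det_pos.ne' (by rw [hB, Matrix.det_mul, h, mul_zero])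
  obtain ⟨f, hf⟩ := exists_stdMatrix_eq (M := (B.transpose)⁻¹) (by simpa using hB_det)
  refine ⟨f, -f (centroid K), ?_, ?_⟩
  · rw [centroid_image_affine hK.1 hK.measureReal_pos, add_neg_cancel]
  · rw [covMatrix_image_affine hK.1 hK.measureReal_pos, hf, hB, ← Matrix.mul_assoc,
      Matrix.nonsing_inv_mul _ (by simpa using hB_det), Matrix.one_mul,
      Matrix.transpose_nonsing_inv, Matrix.transpose_transpose,
      Matrix.mul_nonsing_inv _ (by simpa using hB_det)]

theorem covMatrix_union {D : Set (Euc d)} (hK : IsCompact K) (hD : IsCompact D)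
    (hK0 : 0 < volume.real K) (hD0 : 0 < volume.real D) (h_disj : volume (K ∩ D) = 0) :
    covMatrix (K ∪ D)
      = (volume.real K / (volume.real K + volume.real D)) • covMatrix K
        + (volume.real D / (volume.real K + volume.real D)) • covMatrix D
        + (volume.real K * volume.real D / (volume.real K + volume.real D) ^ 2) •
          Matrix.vecMulVec (centroid D - centroid K) (centroid D - centroid K) := by
  have hKD0 : 0 < volume.real (K ∪ D) := by
    rw [measureReal_union₀ hD.measurableSet.nullMeasurableSet h_disj hK.measure_lt_top.ne
      hD.measure_lt_top.ne]
    positivity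
  have h_mix {g : Euc d → ℝ} (hg : Continuous g) :=
    integral_cond_union (hg.continuousOn.integrableOn_compact hK)
      (hg.continuousOn.integrableOn_compact hD) hD.measurableSet h_disj hK0 hD0
  have hc := continuous_euc_apply (d := d)
  ext i j
  rw [covMatrix_apply_eq_sub (hK.union hD) hKD0, h_mix (by fun_prop), h_mix (hc i), h_mix (hc j)]
  simp only [Matrix.add_apply, Matrix.smul_apply, smul_eq_mul, Matrix.vecMulVec_apply,
    PiLp.sub_apply, covMatrix_apply_eq_sub hK hK0, covMatrix_apply_eq_sub hD hD0,
    centroid_apply hK, centroid_apply hD]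
  field_simp
  ring

theorem trace_covMatrix (hK : IsCompact K) (h0 : 0 < volume.real K) :
    (covMatrix K).trace = ∫ x, ‖x‖ ^ 2 ∂volume[|K] - ‖centroid K‖ ^ 2 := by
  have h_int (i : Fin d) : Integrable (fun x : Euc d => x i * x i) (volume[|K]) :=
    (memLp_euc_apply hK i 2).integrable_mul (memLp_euc_apply hK i 2)
  simp_rw [EuclideanSpace.real_norm_sq_eq, sq]
  rw [integral_finsetSum _ fun i _ => h_int i, ← Finset.sum_sub_distrib]
  exact Finset.sum_congr rfl fun i _ => by
    rw [Matrix.diag_apply, covMatrix_apply_eq_sub hK h0, centroid_apply hK]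

theorem covMatrix_union_of_isIsotropic {D : Set (Euc d)} (h_iso : IsIsotropic K)
    (hK : IsCompact K) (hD : IsCompact D) (hK0 : 0 < volume.real K) (hD0 : 0 < volume.real D)
    (h_disj : volume (K ∩ D) = 0) :
    covMatrix (K ∪ D)
      = (1 + volume.real D / volume.real K)⁻¹ •
        (1 + ((volume.real D / volume.real K) • covMatrix D
          + (volume.real D / (volume.real K + volume.real D)) •
            Matrix.vecMulVec (centroid D) (centroid D))) := by
  rw [covMatrix_union hK hD hK0 hD0 h_disj, h_iso.1, h_iso.2, sub_zero, smul_add, smul_add,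
    smul_smul, smul_smul, add_assoc]
  congr 3 <;> field_simp

theorem one_add_sum_le_prod_one_add {ι : Type*} {s : Finset ι} {a : ι → ℝ}
    (ha : ∀ i ∈ s, 0 ≤ a i) : 1 + ∑ i ∈ s, a i ≤ ∏ i ∈ s, (1 + a i) := by
  induction s using Finset.cons_induction with
  | empty => simp
  | cons i s hi ih =>
    rw [Finset.forall_mem_cons] at ha
    rw [Finset.sum_cons, Finset.prod_cons]
    nlinarith [ih ha.2, Finset.sum_nonneg ha.2]

theorem one_add_trace_le_det_one_add {n : Type*} [Fintype n] [DecidableEq n]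
    {M : Matrix n n ℝ} (hM : M.PosSemidef) : 1 + M.trace ≤ (1 + M).det := by
  have h_det : (1 + M).det = ∏ i, (1 + hM.isHermitian.eigenvalues i) := by
    have h := congrArg (Polynomial.eval (-1)) hM.isHermitian.charpoly_eq
    have h_neg : Matrix.scalar n (-1 : ℝ) - M = -(1 + M) := by rw [map_neg, map_one]; abel
    have h_factor (i : n) : (-1 : ℝ) - hM.isHermitian.eigenvalues i
        = -(1 + hM.isHermitian.eigenvalues i) := by ring
    rw [Matrix.eval_charpoly, Polynomial.eval_prod, h_neg, Matrix.det_neg] at h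
    simp only [Polynomial.eval_sub, Polynomial.eval_X, Polynomial.eval_C, RCLike.ofReal_real_eq_id,
      id, h_factor, Finset.prod_neg, Finset.card_univ] at h
    exact mul_left_cancel₀ (pow_ne_zero _ (by norm_num)) h
  rw [h_det, hM.isHermitian.trace_eq_sum_eigenvalues]
  exact one_add_sum_le_prod_one_add fun i _ => hM.eigenvalues_nonneg i

end Covariance

section Maximizer

variable {d : ℕ} {P : Set (Euc d)}

/-- A convex body in isotropic position that maximizes `L_K ^ (2 * d) = det A(K) / vol(K) ^ 2`. -/
structure IsIsotropicMaximizer (P : Set (Euc d)) : Prop where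
  isConvexBody : IsConvexBody P
  isIsotropic : IsIsotropic P
  det_div_le : ∀ K : Set (Euc d), IsConvexBody K →
    (covMatrix K).det / volume.real K ^ 2 ≤ 1 / volume.real P ^ 2

namespace IsIsotropicMaximizer

variable (hP : IsIsotropicMaximizer P)
include hP

theorem measureReal_pos : 0 < volume.real P := hP.isConvexBody.measureReal_pos

theorem isProbabilityMeasure_cond : IsProbabilityMeasure (volume[|P]) :=
  isProbabilityMeasure_cond_of_isCompact hP.isConvexBody.1 hP.measureReal_pos

theorem integral_norm_sq_cond : ∫ x, ‖x‖ ^ 2 ∂volume[|P] = d := by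
  have h := trace_covMatrix hP.isConvexBody.1 hP.measureReal_pos
  rw [hP.isIsotropic.1, hP.isIsotropic.2, Matrix.trace_one, Fintype.card_fin, norm_zero] at h
  linarith

/-- Adjoining `D` multiplies `det A` by at least `(1 + ε)⁻ᵈ (1 + r E_D ‖x‖²)`, where
`ε = vol D / vol P` and `r = vol D / (vol P + vol D)`. -/
theorem one_add_mul_integral_le {D : Set (Euc d)} (hD : IsCompact D) (hD0 : 0 < volume.real D)
    (h_disj : volume (P ∩ D) = 0) (h_body : IsConvexBody (P ∪ D)) :
    1 + volume.real D / (volume.real P + volume.real D) * ∫ x, ‖x‖ ^ 2 ∂volume[|D]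
      ≤ (1 + volume.real D / volume.real P) ^ (d + 2) := by
  have hP0 := hP.measureReal_pos
  set ε := volume.real D / volume.real P with hε
  set r := volume.real D / (volume.real P + volume.real D) with hr
  have hε0 : 0 < ε := by positivity
  have hr0 : 0 < r := by positivity
  have hrε : r ≤ ε := by rw [hε, hr]; gcongr; linarith
  have h_dot : (centroid D).ofLp ⬝ᵥ (centroid D).ofLp = ‖centroid D‖ ^ 2 := by
    rw [EuclideanSpace.real_norm_sq_eq]
    exact Finset.sum_congr rfl fun i _ => (sq _).symm
  set M := ε • covMatrix D + r • Matrix.vecMulVec (centroid D) (centroid D) with hM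
  have hM_psd : M.PosSemidef :=
    ((posSemidef_covMatrix hD).smul hε0.le).add
      ((Matrix.posSemidef_vecMulVec_self_star (R := ℝ) (centroid D).ofLp).smul hr0.le)
  have h_vol : volume.real (P ∪ D) = (1 + ε) * volume.real P := by
    rw [measureReal_union₀ hD.measurableSet.nullMeasurableSet h_disj
      hP.isConvexBody.1.measure_lt_top.ne hD.measure_lt_top.ne, hε]
    field_simp
  have h_trace : r * ∫ x, ‖x‖ ^ 2 ∂volume[|D] ≤ M.trace := by
    have h_tr_nonneg := (posSemidef_covMatrix hD).trace_nonneg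
    have h_tr := trace_covMatrix hD hD0
    rw [hM, Matrix.trace_add, Matrix.trace_smul, Matrix.trace_smul, Matrix.trace_vecMulVec,
      smul_eq_mul, smul_eq_mul, h_dot]
    nlinarith
  have h_max := hP.det_div_le _ h_body
  rw [covMatrix_union_of_isIsotropic hP.isIsotropic hP.isConvexBody.1 hD hP0 hD0 h_disj, h_vol,
    Matrix.det_smul, Fintype.card_fin, div_le_div_iff₀ (by positivity) (by positivity)] at h_max
  calc _ ≤ 1 + M.trace := by gcongr
    _ ≤ (1 + M).det := one_add_trace_le_det_one_add hM_psd
    _ ≤ (1 + ε) ^ (d + 2) := by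
      rw [inv_pow, mul_pow, one_mul, mul_assoc, inv_mul_le_iff₀ (by positivity), ← mul_assoc,
        ← pow_add] at h_max
      exact le_of_mul_le_mul_right h_max (by positivity)

theorem integral_norm_sq_cond_le {D : Set (Euc d)} (hD : IsCompact D) (hD0 : 0 < volume.real D)
    (h_disj : volume (P ∩ D) = 0) (h_body : IsConvexBody (P ∪ D)) :
    ∫ x, ‖x‖ ^ 2 ∂volume[|D]
      ≤ (∑ j ∈ Finset.range (d + 2), (volume.real D / volume.real P + 1) ^ j)
        * (volume.real D / volume.real P + 1) := by
  have hP0 := hP.measureReal_pos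
  have h := hP.one_add_mul_integral_le hD hD0 h_disj h_body
  have h_ratio : volume.real D / (volume.real P + volume.real D)
      = volume.real D / volume.real P / (volume.real D / volume.real P + 1) := by
    field_simp
    ring
  have hε : 0 < volume.real D / volume.real P := by positivity
  rw [add_comm 1 (_ / volume.real P), ← geom_sum_mul_add, add_comm 1, add_le_add_iff_right, h_ratio,
    div_mul_eq_mul_div, div_le_iff₀ (by positivity), mul_right_comm, mul_comm] at h
  exact le_of_mul_le_mul_right h hε

end IsIsotropicMaximizer

end Maximizer

section VectorBasis

variable {E : Type*} [NormedAddCommGroup E] [NormedSpace ℝ E] {B : Finset E} {x y v w : E}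

/-- A finite set of vectors that is a basis of the ambient space. -/
structure IsVectorBasis (B : Finset E) : Prop where
  linearIndependent : LinearIndependent ℝ ((↑) : B → E)
  span_eq_top : Submodule.span ℝ (B : Set E) = ⊤

/-- The basis, indexed by the elements of `B`, attached to a finite set of basis vectors. -/
def IsVectorBasis.basis (h : IsVectorBasis B) : Module.Basis B ℝ E :=
  Module.Basis.mk h.linearIndependent (by
    rw [Subtype.range_coe_subtype, Finset.setOfPred_mem, h.span_eq_top])

theorem IsVectorBasis.basis_apply (h : IsVectorBasis B) (v : B) : h.basis v = v :=
  Module.Basis.mk_apply _ _ v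

theorem IsVectorBasis.card_eq_finrank (h : IsVectorBasis B) : B.card = Module.finrank ℝ E := by
  rw [Module.finrank_eq_card_basis h.basis, Fintype.card_coe]

theorem isVectorBasis_of_card_eq_finrank (hB : B.card = Module.finrank ℝ E)
    (h_span : Submodule.span ℝ (B : Set E) = ⊤) : IsVectorBasis B := by
  refine ⟨linearIndependent_of_top_le_span_of_card_eq_finrank ?_ ?_, h_span⟩
  · rw [Subtype.range_coe_subtype, Finset.setOfPred_mem, h_span]
  · rw [Fintype.card_coe, hB]

variable [FiniteDimensional ℝ E]

open Classical in
/-- The coordinate functional of `v` with respect to the basis `B`, defined to be zero when `B` is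
not a basis or `v ∉ B`, so that it is available without carrying proofs around. -/
def vcoord (B : Finset E) (v : E) : E →L[ℝ] ℝ :=
  if h : IsVectorBasis B ∧ v ∈ B then
    LinearMap.toContinuousLinearMap (h.1.basis.coord ⟨v, h.2⟩) else 0

/-- The functional `ℓ_B` equal to `1` on every vector of the basis `B`; its level set `ℓ_B = 1` is
the hyperplane through `B`. -/
def sumCoord (B : Finset E) : E →L[ℝ] ℝ := ∑ v ∈ B, vcoord B v

/-- The simplicial cone generated by the basis `B`. -/
def vcone (B : Finset E) : Set E := {x | ∀ v ∈ B, 0 ≤ vcoord B v x}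

/-- The simplex spanned by the origin and the basis `B`. -/
def vsolid (B : Finset E) : Set E := {x | x ∈ vcone B ∧ sumCoord B x ≤ 1}

theorem sumCoord_apply (B : Finset E) (x : E) : sumCoord B x = ∑ v ∈ B, vcoord B v x := by
  simp [sumCoord]

theorem zero_mem_vcone (B : Finset E) : 0 ∈ vcone B := fun v _ => (map_zero (vcoord B v)).ge

theorem sumCoord_nonneg (hx : x ∈ vcone B) : 0 ≤ sumCoord B x := by
  rw [sumCoord_apply]
  exact Finset.sum_nonneg hx

theorem smul_mem_vcone (hx : x ∈ vcone B) {c : ℝ} (hc : 0 ≤ c) : c • x ∈ vcone B := fun v hv => by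
  rw [map_smul, smul_eq_mul]
  exact mul_nonneg hc (hx v hv)

theorem smul_mem_vcone_iff {c : ℝ} (hc : 0 < c) : c • x ∈ vcone B ↔ x ∈ vcone B := by
  simp only [vcone, Set.mem_ofPred_eq, map_smul, smul_eq_mul, mul_nonneg_iff_of_pos_left hc]

theorem convex_vcone (B : Finset E) : Convex ℝ (vcone B) := by
  simp only [vcone, Set.ofPred_forall]
  exact convex_iInter fun v => convex_iInter fun _ =>
    convex_halfSpace_ge (vcoord B v).toLinearMap.isLinear 0

namespace IsVectorBasis

variable (h : IsVectorBasis B)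
include h

theorem vcoord_eq_repr (v : B) (x : E) : vcoord B (v : E) x = h.basis.repr x v := by
  rw [vcoord, dif_pos ⟨h, v.2⟩]
  rfl

theorem sum_vcoord_smul (x : E) : ∑ v ∈ B, vcoord B v x • v = x := by
  rw [← Finset.sum_coe_sort B (fun v => vcoord B v x • v)]
  conv_rhs => rw [← h.basis.sum_repr x]
  exact Finset.sum_congr rfl fun v _ => by rw [h.vcoord_eq_repr, h.basis_apply]

theorem vcoord_apply [DecidableEq E] (hv : v ∈ B) (hw : w ∈ B) :
    vcoord B v w = if v = w then 1 else 0 := by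
  have h_repr := h.basis.repr_self ⟨w, hw⟩
  rw [h.basis_apply] at h_repr
  rw [h.vcoord_eq_repr ⟨v, hv⟩, h_repr, Finsupp.single_apply]
  simp only [Subtype.mk.injEq, eq_comm]

theorem vcoord_self (hv : v ∈ B) : vcoord B v v = 1 := by
  classical rw [h.vcoord_apply hv hv, if_pos rfl]

theorem vcoord_of_ne (hv : v ∈ B) (hw : w ∈ B) (hvw : v ≠ w) : vcoord B v w = 0 := by
  classical rw [h.vcoord_apply hv hw, if_neg hvw]

theorem map_eq_sum {F : Type*} [AddCommGroup F] [Module ℝ F] [TopologicalSpace F]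
    (f : E →L[ℝ] F) (x : E) : f x = ∑ v ∈ B, vcoord B v x • f v := by
  conv_lhs => rw [← h.sum_vcoord_smul x]
  rw [map_sum]
  exact Finset.sum_congr rfl fun v _ => map_smul f _ _

theorem ext_vcoord (hxy : ∀ v ∈ B, vcoord B v x = vcoord B v y) : x = y := by
  rw [← h.sum_vcoord_smul x, ← h.sum_vcoord_smul y]
  exact Finset.sum_congr rfl fun v hv => by rw [hxy v hv]

theorem sumCoord_self (hv : v ∈ B) : sumCoord B v = 1 := by
  rw [sumCoord_apply, Finset.sum_eq_single_of_mem v hv fun w hw => h.vcoord_of_ne hw hv,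
    h.vcoord_self hv]

theorem eq_sumCoord {l : E →L[ℝ] ℝ} (hl : ∀ v ∈ B, l v = 1) : l = sumCoord B := by
  ext x
  rw [h.map_eq_sum l, sumCoord_apply]
  exact Finset.sum_congr rfl fun v hv => by rw [hl v hv, smul_eq_mul, mul_one]

theorem sumCoord_sub_sumCoord [DecidableEq E] {B' : Finset E} (h' : IsVectorBasis B') (hv : v ∈ B)
    (h_sub : B.erase v ⊆ B') (x : E) :
    sumCoord B' x - sumCoord B x = vcoord B v x * (sumCoord B' v - 1) := by
  rw [← sub_apply, h.map_eq_sum (sumCoord B' - sumCoord B), ← Finset.add_sum_erase B _ hv,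
    Finset.sum_eq_zero, add_zero, sub_apply, h.sumCoord_self hv, smul_eq_mul]
  intro w hw
  rw [sub_apply, h'.sumCoord_self (h_sub hw), h.sumCoord_self (Finset.mem_of_mem_erase hw),
    sub_self, smul_zero]

theorem subset_vcone : (B : Set E) ⊆ vcone B := fun w hw v hv => by
  classical
  rw [h.vcoord_apply hv hw]
  split_ifs <;> norm_num

theorem eq_zero_of_sumCoord_eq_zero (hx : x ∈ vcone B) (h0 : sumCoord B x = 0) : x = 0 :=
  h.ext_vcoord fun v hv => by
    rw [map_zero]
    exact (Finset.sum_eq_zero_iff_of_nonneg hx).1 (sumCoord_apply B x ▸ h0) v hv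

theorem convexHull_eq : convexHull ℝ (B : Set E) = {x | x ∈ vcone B ∧ sumCoord B x = 1} := by
  refine subset_antisymm (convexHull_min (fun v hv => ⟨h.subset_vcone hv, h.sumCoord_self hv⟩)
    ((convex_vcone B).inter (convex_hyperplane (sumCoord B).toLinearMap.isLinear 1))) ?_
  rintro x ⟨hx, h1⟩
  rw [Finset.mem_convexHull']
  exact ⟨fun v => vcoord B v x, hx, by rw [← h1, sumCoord_apply], h.sum_vcoord_smul x⟩

theorem vsolid_eq_convexHull : vsolid B = convexHull ℝ (insert 0 (B : Set E)) := by
  refine subset_antisymm (fun x hx => ?_) (convexHull_min (Set.insert_subset ?_ fun v hv => ?_) ?_)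
  · rcases (sumCoord_nonneg hx.1).eq_or_lt with h0 | h0
    · rw [h.eq_zero_of_sumCoord_eq_zero hx.1 h0.symm]
      exact subset_convexHull ℝ _ (Set.mem_insert _ _)
    · have h_face : (sumCoord B x)⁻¹ • x ∈ convexHull ℝ (B : Set E) := by
        rw [h.convexHull_eq]
        refine ⟨smul_mem_vcone hx.1 (inv_pos.2 h0).le, ?_⟩
        rw [map_smul, smul_eq_mul, inv_mul_cancel₀ h0.ne']
      have h_smul := (convex_convexHull ℝ (insert 0 (B : Set E))).smul_mem_of_zero_mem
        (subset_convexHull ℝ _ (Set.mem_insert _ _))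
        (convexHull_mono (Set.subset_insert _ _) h_face) ⟨h0.le, hx.2⟩
      rwa [smul_inv_smul₀ h0.ne'] at h_smul
  · exact ⟨zero_mem_vcone B, by simp⟩
  · exact ⟨h.subset_vcone hv, (h.sumCoord_self hv).le⟩
  · exact (convex_vcone B).inter (convex_halfSpace_le (sumCoord B).toLinearMap.isLinear 1)

theorem vsolid_eq_coneSimplex : vsolid B = coneSimplex h.basis := by
  ext x
  have h_sum : sumCoord B x = ∑ v : B, h.basis.repr x v := by
    rw [sumCoord_apply, ← Finset.sum_coe_sort]
    exact Finset.sum_congr rfl fun v _ => h.vcoord_eq_repr v x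
  simp only [vsolid, vcone, coneSimplex, Set.mem_ofPred_eq, h_sum, Subtype.forall',
    h.vcoord_eq_repr]

/-- The barycentric coordinate of `v` attains its maximum over the simplex only at `v`. -/
theorem mem_extremePoints_convexHull (hv : v ∈ B) :
    v ∈ (convexHull ℝ (B : Set E)).extremePoints ℝ := by
  classical
  refine exposedPoints_subset_extremePoints ⟨subset_convexHull ℝ _ hv, vcoord B v, ?_⟩
  rw [h.convexHull_eq]
  rintro x ⟨hx, h1⟩
  have h_split : vcoord B v x + ∑ w ∈ B.erase v, vcoord B w x = 1 := by
    rw [← h1, sumCoord_apply, Finset.add_sum_erase B (vcoord B · x) hv]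
  have h_nonneg : ∀ w ∈ B.erase v, 0 ≤ vcoord B w x := fun w hw => hx w (Finset.mem_of_mem_erase hw)
  have h_rest := Finset.sum_nonneg h_nonneg
  rw [h.vcoord_self hv]
  refine ⟨by linarith, fun h_le => h.ext_vcoord fun w hw => ?_⟩
  by_cases hwv : w = v
  · rw [hwv, h.vcoord_self hv]
    linarith
  · rw [h.vcoord_of_ne hw hv hwv]
    exact (Finset.sum_eq_zero_iff_of_nonneg h_nonneg).1 (by linarith) w
      (Finset.mem_erase.2 ⟨hwv, hw⟩)

end IsVectorBasis

end VectorBasis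

section DualFace

variable {E : Type*} [NormedAddCommGroup E] [NormedSpace ℝ E] {P : Set E} {S : Finset E} {p x : E}
  {l : StrongDual ℝ E}

/-- The functionals that support `P` at `p`, normalised to the value `1` there: the face of the
polar body dual to `p`. -/
def dualFace (P : Set E) (p : E) : Set (StrongDual ℝ E) := {l | l p = 1 ∧ ∀ x ∈ P, l x ≤ 1}

theorem exists_pos_smul_mem_sdiff_interior (hc : IsCompact P) (hconv : Convex ℝ P)
    (h0 : 0 ∈ interior P) (hx : x ≠ 0) : ∃ r : ℝ, 0 < r ∧ r • x ∈ P \ interior P := by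
  have hn : P ∈ nhds (0 : E) := mem_interior_iff_mem_nhds.1 h0
  have hg : 0 < gauge P x := (gauge_pos (absorbent_nhds_zero hn) (hc.isVonNBounded ℝ)).2 hx
  have h1 : gauge P ((gauge P x)⁻¹ • x) = 1 := by
    rw [gauge_smul_of_nonneg (by positivity), smul_eq_mul, inv_mul_cancel₀ hg.ne']
  refine ⟨(gauge P x)⁻¹, by positivity, ?_, ?_⟩
  · exact hc.isClosed.closure_subset ((gauge_le_one_iff_mem_closure hconv hn).1 h1.le)
  · rw [← gauge_lt_one_iff_mem_interior hconv hn, h1]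
    exact lt_irrefl _

theorem isExposed_contact (hlP : ∀ x ∈ P, l x ≤ 1) (hx : x ∈ P) (h1 : l x = 1) :
    IsExposed ℝ P {z ∈ P | l z = 1} := fun _ => ⟨l, by
  ext z
  refine and_congr_right fun hz => ⟨fun hz1 y hy => hz1 ▸ hlP y hy, fun h_max => ?_⟩
  exact le_antisymm (hlP z hz) (h1 ▸ h_max x hx)⟩

theorem nonempty_dualFace (hP : Convex ℝ P) (h0 : 0 ∈ interior P) (hp : p ∉ interior P) :
    (dualFace P p).Nonempty := by
  obtain ⟨f, hf⟩ := geometric_hahn_banach_open_point hP.interior isOpen_interior hp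
  have hfp : 0 < f p := by simpa using hf 0 h0
  have h_le : ∀ x ∈ P, f x ≤ f p := fun x hx =>
    closure_minimal (fun z hz => (hf z hz).le) (isClosed_le f.continuous continuous_const)
      (hP.closure_interior_eq_closure_of_nonempty_interior ⟨0, h0⟩ ▸ subset_closure hx)
  refine ⟨(f p)⁻¹ • f, by simp [hfp.ne'], fun x hx => ?_⟩
  rw [smul_apply, smul_eq_mul, inv_mul_le_one₀ hfp]
  exact h_le x hx

theorem isCompact_dualFace [FiniteDimensional ℝ E] (h0 : 0 ∈ interior P) (p : E) :
    IsCompact (dualFace P p) := by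
  have h_nhds : P ∩ -P ∈ nhds (0 : E) :=
    Filter.inter_mem (mem_interior_iff_mem_nhds.1 h0)
      (neg_mem_nhds_zero E (mem_interior_iff_mem_nhds.1 h0))
  have h_closed : IsClosed (dualFace P p) := by
    simp only [dualFace, Set.ofPred_and, Set.ofPred_forall]
    exact (isClosed_eq (by fun_prop) continuous_const).inter
      (isClosed_biInter fun x _ => isClosed_le (by fun_prop) continuous_const)
  refine Metric.isCompact_of_isClosed_isBounded h_closed
    ((NormedSpace.isBounded_polar_of_mem_nhds_zero ℝ h_nhds).subset fun l hl => ?_)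
  rw [StrongDual.mem_polar_iff]
  rintro x ⟨hx, hx'⟩
  exact abs_le.2 ⟨by linarith [map_neg l x, hl.2 (-x) hx'], hl.2 x hx⟩

/-- A supporting functional that is not determined by its contact set can be moved in both
directions, hence is not extreme. -/
theorem span_contact_eq_top_of_mem_extremePoints [FiniteDimensional ℝ E]
    (hp : p ∈ convexHull ℝ (S : Set E))
    (hl : l ∈ (dualFace (convexHull ℝ (S : Set E)) p).extremePoints ℝ) :
    Submodule.span ℝ {x ∈ convexHull ℝ (S : Set E) | l x = 1} = ⊤ := by
  by_contra h_span
  obtain ⟨z', hz'_ne, hz'⟩ := Submodule.exists_le_ker_of_lt_top _ (lt_top_iff_ne_top.2 h_span)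
  obtain ⟨z, rfl⟩ : ∃ z : StrongDual ℝ E, z = z' := ⟨LinearMap.toContinuousLinearMap z', rfl⟩
  have hz : ∀ x ∈ convexHull ℝ (S : Set E), l x = 1 → z x = 0 := fun x hx h1 =>
    hz' (Submodule.subset_span ⟨hx, h1⟩)
  have h_slack : ∀ᶠ ε in nhds (0 : ℝ), ∀ s ∈ S, (l + ε • z) s ≤ 1 := by
    rw [Filter.eventually_all_finset]
    intro s hs
    have hsS := subset_convexHull ℝ (S : Set E) hs
    rcases (hl.1.2 s hsS).eq_or_lt with h1 | h1
    · filter_upwards with ε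
      simp [h1, hz s hsS h1]
    · have h_cont : Continuous fun ε : ℝ => (l + ε • z) s := by
        simp only [add_apply, smul_apply]
        fun_prop
      exact (h_cont.continuousAt.eventually_lt continuousAt_const (by simpa using h1)).mono
        fun ε => le_of_lt
  have h_mem : ∀ᶠ ε in nhds (0 : ℝ), l + ε • z ∈ dualFace (convexHull ℝ (S : Set E)) p := by
    filter_upwards [h_slack] with ε hε
    exact ⟨by simp [hl.1.1, hz p hp hl.1.1],
      convexHull_min hε (convex_halfSpace_le (l + ε • z).toLinearMap.isLinear 1)⟩
  have h_neg : ∀ᶠ ε in nhds (0 : ℝ), l + (-ε) • z ∈ dualFace (convexHull ℝ (S : Set E)) p :=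
    (continuous_neg.tendsto' (0 : ℝ) 0 neg_zero).eventually h_mem
  obtain ⟨ε, ⟨h_add, h_sub⟩, hε⟩ :=
    (((h_mem.and h_neg).filter_mono nhdsWithin_le_nhds).and
      (self_mem_nhdsWithin (s := Set.Ioi (0 : ℝ)))).exists
  have h_eq : l + ε • z = l :=
    (mem_extremePoints.1 hl).2 _ h_add _ h_sub
      ⟨1 / 2, 1 / 2, by norm_num, by norm_num, by norm_num, by module⟩ |>.1
  refine hz'_ne ?_
  rw [add_eq_left, smul_eq_zero] at h_eq
  rw [h_eq.resolve_left (Set.mem_Ioi.1 hε).ne']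
  rfl

end DualFace

section Facets

variable {E : Type*} [NormedAddCommGroup E] [NormedSpace ℝ E] [FiniteDimensional ℝ E]
  {P : Set E} {S B : Finset E} {l : StrongDual ℝ E} {x v : E}

/-- `B` is the vertex set of a facet of `P`, where `P` contains the origin in its interior. -/
structure IsFacetBase (P : Set E) (B : Finset E) : Prop where
  isVectorBasis : IsVectorBasis B
  subset : (B : Set E) ⊆ P
  sumCoord_le : ∀ x ∈ P, sumCoord B x ≤ 1
  mem_vcone : ∀ x ∈ P, sumCoord B x = 1 → x ∈ vcone B

theorem IsFacetBase.contact_eq (hB : IsFacetBase P B) (hP : Convex ℝ P) :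
    {x ∈ P | sumCoord B x = 1} = convexHull ℝ (B : Set E) := by
  rw [hB.isVectorBasis.convexHull_eq]
  ext x
  refine and_congr_left fun h1 => ⟨fun hx => hB.mem_vcone x hx h1, fun hx => ?_⟩
  exact convexHull_min hB.subset hP (hB.isVectorBasis.convexHull_eq ▸ ⟨hx, h1⟩)

theorem IsFacetBase.mem_extremePoints (hB : IsFacetBase P B) (hP : Convex ℝ P) (hv : v ∈ B) :
    v ∈ P.extremePoints ℝ := by
  have h_face := isExposed_contact hB.sumCoord_le (hB.subset hv) (hB.isVectorBasis.sumCoord_self hv)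
  rw [hB.contact_eq hP] at h_face
  exact h_face.isExtreme.extremePoints_subset_extremePoints
    (hB.isVectorBasis.mem_extremePoints_convexHull hv)

theorem sdim_eq_of_span_eq_top {F : Set E} (hl : ∀ x ∈ F, l x = 1)
    (h_span : Submodule.span ℝ F = ⊤) : sdim F = Module.finrank ℝ E - 1 := by
  rcases F.eq_empty_or_nonempty with rfl | ⟨y, hy⟩
  · rw [sdim, AffineSubspace.span_empty, AffineSubspace.direction_bot, finrank_bot,
      ← finrank_top ℝ E, ← h_span, Submodule.span_empty, finrank_bot]
  have h_ker : (affineSpan ℝ F).direction ≤ LinearMap.ker (l : E →ₗ[ℝ] ℝ) := by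
    rw [direction_affineSpan, vectorSpan_def, Submodule.span_le]
    rintro _ ⟨a, ha, b, hb, rfl⟩
    simp [hl a ha, hl b hb]
  have h_lt : LinearMap.ker (l : E →ₗ[ℝ] ℝ) ≠ ⊤ := fun h => by
    have : y ∈ LinearMap.ker (l : E →ₗ[ℝ] ℝ) := h ▸ Submodule.mem_top
    simp [hl y hy] at this
  have h_top : (affineSpan ℝ F).direction ⊔ Submodule.span ℝ {y} = ⊤ := by
    rw [eq_top_iff, ← h_span, Submodule.span_le]
    intro x hx
    rw [← sub_add_cancel x y]
    exact Submodule.add_mem_sup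
      (AffineSubspace.vsub_mem_direction (subset_affineSpan ℝ F hx) (subset_affineSpan ℝ F hy))
      (Submodule.mem_span_singleton_self y)
  have h_upper := (Submodule.finrank_mono h_ker).trans_lt (Submodule.finrank_lt h_lt)
  have h_lower := Submodule.finrank_add_le_finrank_add_finrank (affineSpan ℝ F).direction
    (Submodule.span ℝ {y})
  have h_one : Module.finrank ℝ (Submodule.span ℝ {y}) ≤ 1 := by
    simpa using finrank_span_le_card (R := ℝ) ({y} : Set E)
  rw [h_top, finrank_top] at h_lower
  rw [sdim]
  omega

theorem exists_isFacetBase_of_isSimplexWith (hlP : ∀ x ∈ P, l x ≤ 1)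
    (h_span : Submodule.span ℝ {z ∈ P | l z = 1} = ⊤)
    (h_simp : IsSimplexWith (Module.finrank ℝ E) {z ∈ P | l z = 1}) :
    ∃ B, IsFacetBase P B ∧ l = sumCoord B := by
  classical
  obtain ⟨w, hw, h_face⟩ := h_simp
  obtain ⟨B, hB⟩ : ∃ B : Finset E, B = Finset.univ.image w := ⟨_, rfl⟩
  have hB_range : (B : Set E) = Set.range w := by simp [hB]
  rw [← hB_range] at h_face
  have hB_mem : ∀ v ∈ B, v ∈ P ∧ l v = 1 := fun v hv => by
    have : v ∈ {z ∈ P | l z = 1} := h_face ▸ subset_convexHull ℝ _ hv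
    exact this
  have h_basis : IsVectorBasis B := by
    refine isVectorBasis_of_card_eq_finrank ?_ ?_
    · rw [hB, Finset.card_image_of_injective _ hw.injective, Finset.card_univ, Fintype.card_fin]
    · rw [eq_top_iff, ← h_span, Submodule.span_le, h_face]
      exact convexHull_min Submodule.subset_span (Submodule.convex _)
  have hl : l = sumCoord B := h_basis.eq_sumCoord fun v hv => (hB_mem v hv).2
  refine ⟨B, ⟨h_basis, fun v hv => (hB_mem v hv).1, hl ▸ hlP, fun z hz h1 => ?_⟩, hl⟩
  have hz' : z ∈ convexHull ℝ (B : Set E) := h_face ▸ ⟨hz, hl ▸ h1⟩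
  rw [h_basis.convexHull_eq] at hz'
  exact hz'.1

theorem exists_isFacetBase_mem_vcone (h0 : 0 ∈ interior (convexHull ℝ (S : Set E)))
    (h_simp : ∀ F : Set E, IsFacetOf (Module.finrank ℝ E) (convexHull ℝ (S : Set E)) F →
      IsSimplexWith (Module.finrank ℝ E) F) (hx : x ≠ 0) :
    ∃ B, IsFacetBase (convexHull ℝ (S : Set E)) B ∧ x ∈ vcone B := by
  have hc := S.finite_toSet.isCompact_convexHull ℝ
  have hconv := convex_convexHull ℝ (S : Set E)
  obtain ⟨r, hr, hrP, hri⟩ := exists_pos_smul_mem_sdiff_interior hc hconv h0 hx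
  obtain ⟨l, hl⟩ := (isCompact_dualFace h0 (r • x)).extremePoints_nonempty
    (nonempty_dualFace hconv h0 hri)
  have h_span := span_contact_eq_top_of_mem_extremePoints hrP hl
  obtain ⟨B, hB, rfl⟩ := exists_isFacetBase_of_isSimplexWith hl.1.2 h_span
    (h_simp _ ⟨isExposed_contact hl.1.2 hrP hl.1.1,
      sdim_eq_of_span_eq_top (fun _ hz => hz.2) h_span⟩)
  exact ⟨B, hB, (smul_mem_vcone_iff hr).1 (hB.mem_vcone _ hrP hl.1.1)⟩

end Facets

section SimplicialAround

variable {E : Type*} [NormedAddCommGroup E] [NormedSpace ℝ E] [FiniteDimensional ℝ E]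

/-- `P` is a convex body containing the origin in its interior, and `𝓕` is the finite collection of
the vertex sets of its facets, all of them simplices. Simpliciality enters through the last field:
the cones over the simplicial facets cover the space. -/
structure IsSimplicialAround (P : Set E) (𝓕 : Finset (Finset E)) : Prop where
  isCompact : IsCompact P
  convex : Convex ℝ P
  zero_mem_interior : 0 ∈ interior P
  isFacetBase_of_mem : ∀ B ∈ 𝓕, IsFacetBase P B
  exists_mem_vcone : ∀ x, ∃ B ∈ 𝓕, x ∈ vcone B

theorem exists_isSimplicialAround [Nontrivial E] {P : Set E} (hP : IsPolytope P)
    (h0 : 0 ∈ interior P)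
    (h_simp : ∀ F : Set E, IsFacetOf (Module.finrank ℝ E) P F →
      IsSimplexWith (Module.finrank ℝ E) F) :
    ∃ 𝓕, IsSimplicialAround P 𝓕 := by
  classical
  obtain ⟨S, rfl⟩ := hP
  have h_sub : ∀ B, IsFacetBase (convexHull ℝ (S : Set E)) B → B ∈ S.powerset := fun B hB =>
    Finset.mem_powerset.2 fun v hv =>
      extremePoints_convexHull_subset (hB.mem_extremePoints (convex_convexHull ℝ _) hv)
  refine ⟨S.powerset.filter (IsFacetBase (convexHull ℝ (S : Set E))),
    S.finite_toSet.isCompact_convexHull ℝ, convex_convexHull ℝ _, h0,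
    fun B hB => (Finset.mem_filter.1 hB).2, fun x => ?_⟩
  rcases eq_or_ne x 0 with rfl | hx
  · obtain ⟨y, hy⟩ := exists_ne (0 : E)
    obtain ⟨B, hB, -⟩ := exists_isFacetBase_mem_vcone h0 h_simp hy
    exact ⟨B, Finset.mem_filter.2 ⟨h_sub B hB, hB⟩, zero_mem_vcone B⟩
  · obtain ⟨B, hB, hxB⟩ := exists_isFacetBase_mem_vcone h0 h_simp hx
    exact ⟨B, Finset.mem_filter.2 ⟨h_sub B hB, hB⟩, hxB⟩

namespace IsSimplicialAround

variable {P : Set E} {𝓕 : Finset (Finset E)} (hP : IsSimplicialAround P 𝓕)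
  {B B' G : Finset E} {x q v r : E}
include hP

theorem isVectorBasis (hB : B ∈ 𝓕) : IsVectorBasis B :=
  (hP.isFacetBase_of_mem B hB).isVectorBasis

theorem subset (hB : B ∈ 𝓕) : (B : Set E) ⊆ P := (hP.isFacetBase_of_mem B hB).subset

theorem sumCoord_le (hB : B ∈ 𝓕) (hx : x ∈ P) : sumCoord B x ≤ 1 :=
  (hP.isFacetBase_of_mem B hB).sumCoord_le x hx

theorem zero_mem : (0 : E) ∈ P := interior_subset hP.zero_mem_interior

theorem vsolid_subset (hB : B ∈ 𝓕) : vsolid B ⊆ P := by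
  rw [(hP.isVectorBasis hB).vsolid_eq_convexHull]
  exact convexHull_min (Set.insert_subset hP.zero_mem (hP.subset hB)) hP.convex

theorem eq_biUnion_vsolid : P = ⋃ B ∈ 𝓕, vsolid B := by
  refine subset_antisymm (fun x hx => ?_) (Set.iUnion₂_subset fun B hB => hP.vsolid_subset hB)
  obtain ⟨B, hB, hxB⟩ := hP.exists_mem_vcone x
  exact Set.mem_biUnion hB ⟨hxB, hP.sumCoord_le hB hx⟩

theorem mem_of_forall_sumCoord_le (hx : ∀ B ∈ 𝓕, sumCoord B x ≤ 1) : x ∈ P := by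
  obtain ⟨B, hB, hxB⟩ := hP.exists_mem_vcone x
  exact hP.vsolid_subset hB ⟨hxB, hx B hB⟩

theorem mem_of_sumCoord_eq_one (hB : B ∈ 𝓕) (hB' : B' ∈ 𝓕) (hv : v ∈ B)
    (h1 : sumCoord B' v = 1) : v ∈ B' := by
  have hB'_base := hP.isFacetBase_of_mem B' hB'
  have h_mem : v ∈ convexHull ℝ (B' : Set E) :=
    hB'_base.contact_eq hP.convex ▸ ⟨hP.subset hB hv, h1⟩
  exact extremePoints_convexHull_subset (inter_extremePoints_subset_extremePoints_of_subset
    (convexHull_min hB'_base.subset hP.convex)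
    ⟨h_mem, (hP.isFacetBase_of_mem B hB).mem_extremePoints hP.convex hv⟩)

theorem sumCoord_lt_one (hB : B ∈ 𝓕) (hB' : B' ∈ 𝓕) (hv : v ∈ B) (hv' : v ∉ B') :
    sumCoord B' v < 1 :=
  (hP.sumCoord_le hB' (hP.subset hB hv)).lt_of_ne fun h1 =>
    hv' (hP.mem_of_sumCoord_eq_one hB hB' hv h1)

theorem sumCoord_sum_lt {R : Finset E} (hB : B ∈ 𝓕) (hB' : B' ∈ 𝓕) (hR : R ⊆ B) (hR' : ¬R ⊆ B') :
    sumCoord B' (∑ v ∈ R, v) < R.card := by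
  obtain ⟨v, hv, hv'⟩ := Finset.not_subset.1 hR'
  rw [map_sum, Finset.card_eq_sum_ones, Nat.cast_sum, Nat.cast_one]
  exact Finset.sum_lt_sum (fun v hv => hP.sumCoord_le hB' (hP.subset hB (hR hv)))
    ⟨v, hv, hP.sumCoord_lt_one hB hB' (hR hv) hv'⟩

theorem card_eq_finrank (hB : B ∈ 𝓕) : B.card = Module.finrank ℝ E :=
  (hP.isVectorBasis hB).card_eq_finrank

theorem eq_of_subset (hB : B ∈ 𝓕) (hB' : B' ∈ 𝓕) (h : B ⊆ B') : B = B' :=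
  Finset.eq_of_subset_of_card_le h (by rw [hP.card_eq_finrank hB, hP.card_eq_finrank hB'])

theorem sumCoord_injOn : Set.InjOn sumCoord (𝓕 : Set (Finset E)) := fun _ hB _ hB' h =>
  hP.eq_of_subset hB hB' fun _ hv => hP.mem_of_sumCoord_eq_one hB hB' hv
    (h ▸ (hP.isVectorBasis hB).sumCoord_self hv)

theorem sumCoord_le_of_mem_vcone (hB : B ∈ 𝓕) (hB' : B' ∈ 𝓕) (hx : x ∈ vcone B) :
    sumCoord B' x ≤ sumCoord B x := by
  rw [(hP.isVectorBasis hB).map_eq_sum (sumCoord B'), sumCoord_apply B]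
  refine Finset.sum_le_sum fun v hv => ?_
  exact mul_le_of_le_one_right (hx v hv) (hP.sumCoord_le hB' (hP.subset hB hv))

/-- A segment from `P` to `q` leaves `P` through the facet `B`, the only one whose inequality `q`
violates; its remaining part lies in the added simplex. -/
theorem convexHull_insert_eq (hB : B ∈ 𝓕)
    (hq : ∀ B' ∈ 𝓕, B' ≠ B → sumCoord B' q ≤ 1) :
    convexHull ℝ (insert q P) = P ∪ convexHull ℝ (insert q (B : Set E)) := by
  refine subset_antisymm ?_ (Set.union_subset ((Set.subset_insert _ _).trans
    (subset_convexHull ℝ _)) (convexHull_mono (Set.insert_subset_insert (hP.subset hB))))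
  rw [convexHull_insert ⟨0, hP.zero_mem⟩, hP.convex.convexHull_eq, convexJoin_singleton_left]
  refine Set.iUnion₂_subset fun p hp => ?_
  have h_mem : ∀ z ∈ segment ℝ p q, sumCoord B z ≤ 1 → z ∈ P := by
    refine fun z hz h1 => hP.mem_of_forall_sumCoord_le fun B' hB' => ?_
    by_cases hBB' : B' = B
    · exact hBB' ▸ h1
    · exact (convex_halfSpace_le (sumCoord B').toLinearMap.isLinear 1).segment_subset
        (hP.sumCoord_le hB' hp) (hq B' hB' hBB') hz
  intro x hx
  rw [segment_symm] at hx
  rcases le_or_gt (sumCoord B x) 1 with h1 | h1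
  · exact Or.inl (h_mem x hx h1)
  obtain ⟨y, hy, hy1⟩ : (1 : ℝ) ∈ sumCoord B '' segment ℝ p x := by
    have h_cont : ContinuousOn (sumCoord B) (segment ℝ p x) := (sumCoord B).continuous.continuousOn
    exact (convex_segment p x).isPreconnected.intermediate_value (left_mem_segment ℝ p x)
      (right_mem_segment ℝ p x) h_cont ⟨hP.sumCoord_le hB hp, h1.le⟩
  rw [mem_segment_iff_wbtw] at hx hy
  have hyq : Wbtw ℝ p y q := hx.trans_left hy
  have hxy : x ∈ segment ℝ y q := mem_segment_iff_wbtw.2 (hx.trans_left_right hy)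
  have hyB : y ∈ convexHull ℝ (B : Set E) :=
    (hP.isFacetBase_of_mem B hB).contact_eq hP.convex ▸
      ⟨h_mem y (mem_segment_iff_wbtw.2 hyq) hy1.le, hy1⟩
  exact Or.inr ((convex_convexHull ℝ _).segment_subset
    (convexHull_mono (Set.subset_insert q _) hyB)
    (subset_convexHull ℝ _ (Set.mem_insert q _)) hxy)

variable [DecidableEq E]

/-- Step from the middle of the ridge `G ∖ r` slightly away from `r`: the cone met there belongs to
a facet that still contains the ridge, since all others stay strictly below `ℓ_G`. -/
theorem exists_erase_subset_mem_vcone (hG : G ∈ 𝓕) (hr : r ∈ G) :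
    ∃ B ∈ 𝓕, G.erase r ⊆ B ∧ ∃ x ∈ vcone B, vcoord G r x < 0 := by
  have hG_basis := hP.isVectorBasis hG
  have h_near : ∀ B ∈ 𝓕, ¬G.erase r ⊆ B → ∀ᶠ s in nhds (0 : ℝ),
      sumCoord B (∑ v ∈ G.erase r, v - s • r) < sumCoord G (∑ v ∈ G.erase r, v - s • r) := by
    intro B hB h_sub
    refine ContinuousAt.eventually_lt (by fun_prop) (by fun_prop) ?_
    have h_ridge : sumCoord G (∑ v ∈ G.erase r, v) = (G.erase r).card := by
      rw [map_sum, Finset.sum_congr rfl fun v hv =>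
        hG_basis.sumCoord_self (Finset.mem_of_mem_erase hv)]
      simp
    simpa [h_ridge] using hP.sumCoord_sum_lt hG hB (Finset.erase_subset r G) h_sub
  have h_all := (Filter.eventually_all_finset 𝓕).2 fun B hB =>
    Filter.eventually_imp_distrib_left.2 (h_near B hB)
  obtain ⟨s, hs, hs0⟩ := ((h_all.filter_mono nhdsWithin_le_nhds).and
    (self_mem_nhdsWithin (s := Set.Ioi (0 : ℝ)))).exists
  obtain ⟨B, hB, hx⟩ := hP.exists_mem_vcone (∑ v ∈ G.erase r, v - s • r)
  refine ⟨B, hB, ?_, _, hx, ?_⟩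
  · by_contra h_sub
    exact (hP.sumCoord_le_of_mem_vcone hB hG hx).not_gt (hs B hB h_sub)
  · rw [map_sub, map_smul, map_sum, Finset.sum_eq_zero fun v hv => hG_basis.vcoord_of_ne hr
      (Finset.mem_of_mem_erase hv) (Finset.ne_of_mem_erase hv).symm, hG_basis.vcoord_self hr]
    simpa using hs0

theorem exists_neighbor (hG : G ∈ 𝓕) (hr : r ∈ G) :
    ∃ r', insert r' (G.erase r) ∈ 𝓕 ∧ vcoord G r r' < 0 := by
  obtain ⟨B, hB, h_sub, x, hx, hxr⟩ := hP.exists_erase_subset_mem_vcone hG hr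
  have h_card : B.card = (G.erase r).card + 1 := by
    rw [hP.card_eq_finrank hB, ← hP.card_eq_finrank hG, Finset.card_erase_add_one hr]
  obtain ⟨r', hr', rfl⟩ := Finset.exists_eq_insert_iff.2 ⟨h_sub, h_card.symm⟩
  refine ⟨r', hB, ?_⟩
  have h_eq : vcoord G r x = vcoord (insert r' (G.erase r)) r' x * vcoord G r r' := by
    rw [(hP.isVectorBasis hB).map_eq_sum (vcoord G r), Finset.sum_insert hr',
      Finset.sum_eq_zero, add_zero, smul_eq_mul]
    intro v hv
    rw [(hP.isVectorBasis hG).vcoord_of_ne hr (Finset.mem_of_mem_erase hv)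
      (Finset.ne_of_mem_erase hv).symm, smul_zero]
  by_contra! h_nonneg
  exact hxr.not_ge (h_eq ▸ mul_nonneg (hx r' (Finset.mem_insert_self r' _)) h_nonneg)

/-- The facet graph is connected, by the simplex algorithm: maximise `ℓ_G x` over `G ∈ 𝓖`; a
negative coordinate of `x` with respect to `G` would be a pivot to a neighbour with larger value. -/
theorem exists_mem_vcone_of_forall_neighbor {𝓖 : Finset (Finset E)} (h𝓖 : 𝓖 ⊆ 𝓕)
    (h_ne : 𝓖.Nonempty)
    (h_nbr : ∀ G ∈ 𝓖, ∀ r ∈ G, ∃ r', insert r' (G.erase r) ∈ 𝓖 ∧ vcoord G r r' < 0) (x : E) :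
    ∃ G ∈ 𝓖, x ∈ vcone G := by
  obtain ⟨G, hG, h_max⟩ := 𝓖.exists_max_image (sumCoord · x) h_ne
  refine ⟨G, hG, fun r hr => ?_⟩
  by_contra! h_neg
  obtain ⟨r', hG', hr'⟩ := h_nbr G hG r hr
  have hG_basis := hP.isVectorBasis (h𝓖 hG)
  have h_notMem : r ∉ insert r' (G.erase r) := by
    have h_ne : r ≠ r' := fun h => by
      rw [← h, hG_basis.vcoord_self hr] at hr'
      linarith
    simp [h_ne]
  have h_lt := hP.sumCoord_lt_one (h𝓖 hG) (h𝓖 hG') hr h_notMem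
  have h_pivot := hG_basis.sumCoord_sub_sumCoord (hP.isVectorBasis (h𝓖 hG')) hr
    (Finset.subset_insert r' _) x
  nlinarith [h_max _ hG']

theorem eq_of_forall_neighbor {𝓖 : Finset (Finset E)} (h𝓖 : 𝓖 ⊆ 𝓕) (h_ne : 𝓖.Nonempty)
    (h_nbr : ∀ G ∈ 𝓖, ∀ r ∈ G, ∃ r', insert r' (G.erase r) ∈ 𝓖 ∧ vcoord G r r' < 0) : 𝓖 = 𝓕 := by
  refine h𝓖.antisymm fun B hB => ?_
  obtain ⟨G, hG, hx⟩ := hP.exists_mem_vcone_of_forall_neighbor h𝓖 h_ne h_nbr (∑ v ∈ B, v)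
  by_contra hB'
  have h_sub : ¬B ⊆ G := fun h => hB' (hP.eq_of_subset hB (h𝓖 hG) h ▸ hG)
  have h_lt := hP.sumCoord_sum_lt hB (h𝓖 hG) subset_rfl h_sub
  have h_le := hP.sumCoord_le_of_mem_vcone (h𝓖 hG) hB hx
  rw [map_sum, Finset.sum_congr rfl fun v hv => (hP.isVectorBasis hB).sumCoord_self hv] at h_le
  simp only [Finset.sum_const, nsmul_eq_mul, mul_one] at h_le
  linarith

end IsSimplicialAround

end SimplicialAround

section Caps

variable {E : Type*} [NormedAddCommGroup E] [NormedSpace ℝ E] [FiniteDimensional ℝ E]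
  {B : Finset E} {q : E}

theorem addHaar_level_eq_zero [MeasurableSpace E] [BorelSpace E] (μ : Measure E)
    [μ.IsAddHaarMeasure] {l : E →L[ℝ] ℝ} (hl : l ≠ 0) (c : ℝ) : μ {x | l x = c} = 0 := by
  rcases Set.eq_empty_or_nonempty {x | l x = c} with h | ⟨y, hy⟩
  · rw [h, measure_empty]
  have h_eq : {x | l x = c} = (AffineSubspace.mk' y (LinearMap.ker (l : E →ₗ[ℝ] ℝ)) : Set E) := by
    ext x
    simp [AffineSubspace.mem_mk', sub_eq_zero, show l y = c from hy]
  have h_ker : LinearMap.ker (l : E →ₗ[ℝ] ℝ) ≠ ⊤ := fun h =>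
    hl (ContinuousLinearMap.coe_injective (LinearMap.ker_eq_top.1 h))
  rw [h_eq]
  refine Measure.addHaar_affineSubspace μ _ fun h => h_ker ?_
  simpa using congrArg AffineSubspace.direction h

/-- The linear automorphism `x ↦ x - ℓ_B(x) q`; followed by the translation by `q` it fixes the
basis `B` and moves the apex `0` of `vsolid B` to `q`. -/
def apexEquiv (hq : sumCoord B q ≠ 1) : E ≃L[ℝ] E :=
  (LinearEquiv.dilatransvection (f := (sumCoord B).toLinearMap) (v := -q) (by
    rw [isUnit_iff_ne_zero, map_neg, ← sub_eq_add_neg, sub_ne_zero]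
    exact hq.symm)).toContinuousLinearEquiv

theorem apexEquiv_apply (hq : sumCoord B q ≠ 1) (x : E) :
    apexEquiv hq x = x - sumCoord B x • q := by
  simp [apexEquiv, LinearEquiv.dilatransvection.apply, sub_eq_add_neg]

theorem det_apexEquiv (hq : sumCoord B q ≠ 1) :
    LinearMap.det (apexEquiv hq : E →ₗ[ℝ] E) = 1 - sumCoord B q := by
  have h := LinearMap.transvection.det (sumCoord B).toLinearMap (-q)
  rw [map_neg, ← sub_eq_add_neg] at h
  exact h

namespace IsVectorBasis

variable (h : IsVectorBasis B)
include h

theorem isCompact_vsolid : IsCompact (vsolid B) :=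
  h.vsolid_eq_coneSimplex ▸ isCompact_coneSimplex h.basis

theorem image_apexEquiv_vsolid (hq : sumCoord B q ≠ 1) :
    (fun x => apexEquiv hq x + q) '' vsolid B = convexHull ℝ (insert q (B : Set E)) := by
  obtain ⟨A, hA⟩ : ∃ A : E →ᵃ[ℝ] E, ⇑A = fun x => apexEquiv hq x + q :=
    ⟨(apexEquiv hq).toLinearMap.toAffineMap + AffineMap.const ℝ E q, rfl⟩
  rw [← hA, h.vsolid_eq_convexHull, AffineMap.image_convexHull, Set.image_insert_eq, hA]
  congr 2
  · simp only [map_zero, zero_add]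
  · refine (Set.image_congr fun v hv => ?_).trans (Set.image_id _)
    rw [apexEquiv_apply, h.sumCoord_self hv, one_smul, sub_add_cancel, id]

theorem apexEquiv_add_eq_sum (hq : sumCoord B q ≠ 1) (x : E) :
    apexEquiv hq x + q = q + ∑ v : B, h.basis.repr x v • ((v : E) - q) := by
  have h_sum : ∑ v : B, h.basis.repr x v • ((v : E) - q) = ∑ v ∈ B, vcoord B v x • (v - q) := by
    rw [← Finset.sum_coe_sort B (fun v => vcoord B v x • (v - q))]
    exact Finset.sum_congr rfl fun v _ => by rw [h.vcoord_eq_repr]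
  simp_rw [h_sum, smul_sub, Finset.sum_sub_distrib]
  rw [h.sum_vcoord_smul, ← Finset.sum_smul, ← sumCoord_apply, apexEquiv_apply, add_comm]

variable [MeasurableSpace E] [BorelSpace E] (μ : Measure E) [μ.IsAddHaarMeasure]

theorem measureReal_vsolid_pos : 0 < μ.real (vsolid B) :=
  h.vsolid_eq_coneSimplex ▸ measureReal_coneSimplex_pos μ h.basis

theorem measureReal_convexHull_insert (hq : sumCoord B q ≠ 1) :
    μ.real (convexHull ℝ (insert q (B : Set E))) = |1 - sumCoord B q| * μ.real (vsolid B) := by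
  rw [← h.image_apexEquiv_vsolid hq, Measure.real, measure_image_affine, det_apexEquiv,
    ENNReal.toReal_mul, ENNReal.toReal_ofReal (abs_nonneg _), Measure.real]

end IsVectorBasis

end Caps

section MeanSquare

variable {E : Type*} [NormedAddCommGroup E]

/-- The mean of `‖x‖ ^ 2` over the simplex with vertices `q` and the elements of `B`. -/
def meanSqNorm (B : Finset E) (q : E) : ℝ :=
  (‖q + ∑ v ∈ B, v‖ ^ 2 + (‖q‖ ^ 2 + ∑ v ∈ B, ‖v‖ ^ 2)) / (((B.card : ℝ) + 1) * ((B.card : ℝ) + 2))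

theorem continuous_meanSqNorm (B : Finset E) : Continuous (meanSqNorm B) := by
  unfold meanSqNorm
  fun_prop

variable [InnerProductSpace ℝ E] {B : Finset E}

theorem meanSqNorm_sub_meanSqNorm_zero (B : Finset E) (k : E) :
    meanSqNorm B k - meanSqNorm B 0
      = 2 * (⟪k, ∑ v ∈ B, v⟫ + ‖k‖ ^ 2) / (((B.card : ℝ) + 1) * ((B.card : ℝ) + 2)) := by
  rw [meanSqNorm, meanSqNorm, norm_add_sq_real, zero_add, norm_zero, ← sub_div]
  ring

theorem sum_meanSqNorm (B : Finset E) :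
    ∑ k ∈ B, meanSqNorm B k = ((B.card : ℝ) + 2) * meanSqNorm B 0 := by
  have h_sub : ∑ k ∈ B, (meanSqNorm B k - meanSqNorm B 0) = 2 * meanSqNorm B 0 := by
    simp_rw [meanSqNorm_sub_meanSqNorm_zero]
    rw [← Finset.sum_div, ← Finset.mul_sum, Finset.sum_add_distrib, ← sum_inner,
      real_inner_self_eq_norm_sq, meanSqNorm, zero_add, norm_zero]
    ring
  rw [Finset.sum_sub_distrib, Finset.sum_const, nsmul_eq_mul] at h_sub
  linarith

theorem IsVectorBasis.integral_norm_sq_cond_convexHull_insert [FiniteDimensional ℝ E]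
    [MeasurableSpace E] [BorelSpace E] (μ : Measure E) [μ.IsAddHaarMeasure] (h : IsVectorBasis B)
    {q : E} (hq : sumCoord B q ≠ 1) :
    ∫ x, ‖x‖ ^ 2 ∂μ[|convexHull ℝ (insert q (B : Set E))] = meanSqNorm B q := by
  have h_cont : Continuous fun x => apexEquiv hq x + q := by fun_prop
  rw [← h.image_apexEquiv_vsolid hq, cond_image_affine μ _ _ h.isCompact_vsolid,
    integral_map h_cont.aemeasurable (by fun_prop), integral_cond_eq, h.vsolid_eq_coneSimplex]
  simp_rw [h.apexEquiv_add_eq_sum hq]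
  rw [integral_coneSimplex_norm_add_sq, mul_div_assoc,
    inv_mul_cancel_left₀ (measureReal_coneSimplex_pos μ _).ne', Fintype.card_coe,
    Finset.sum_coe_sort B (fun v => v), Finset.sum_coe_sort B (fun v => ‖v‖ ^ 2), meanSqNorm]

theorem IsVectorBasis.setIntegral_vsolid_norm_sq [FiniteDimensional ℝ E] [MeasurableSpace E]
    [BorelSpace E] (μ : Measure E) [μ.IsAddHaarMeasure] (h : IsVectorBasis B) :
    ∫ x in vsolid B, ‖x‖ ^ 2 ∂μ = μ.real (vsolid B) * meanSqNorm B 0 := by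
  rw [← h.integral_norm_sq_cond_convexHull_insert μ (by simp), ← h.vsolid_eq_convexHull,
    integral_cond_eq, mul_inv_cancel_left₀ (h.measureReal_vsolid_pos μ).ne']

end MeanSquare

section VertexEquation

namespace IsSimplicialAround

variable {E : Type*} [NormedAddCommGroup E] [NormedSpace ℝ E] [FiniteDimensional ℝ E]
  [MeasurableSpace E] [BorelSpace E] (μ : Measure E) [μ.IsAddHaarMeasure] {P : Set E}
  {𝓕 : Finset (Finset E)} (hP : IsSimplicialAround P 𝓕)
include hP

theorem addHaar_vsolid_inter {B B' : Finset E} (hB : B ∈ 𝓕) (hB' : B' ∈ 𝓕) (h : B ≠ B') :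
    μ (vsolid B ∩ vsolid B') = 0 := by
  have hl : sumCoord B - sumCoord B' ≠ 0 := fun h0 =>
    h (hP.sumCoord_injOn hB hB' (sub_eq_zero.1 h0))
  refine measure_mono_null (fun x hx => ?_) (addHaar_level_eq_zero μ hl 0)
  rw [Set.mem_ofPred_eq, sub_apply, sub_eq_zero]
  exact le_antisymm (hP.sumCoord_le_of_mem_vcone hB' hB hx.2.1)
    (hP.sumCoord_le_of_mem_vcone hB hB' hx.1.1)

theorem setIntegral_eq_sum_vsolid {g : E → ℝ} (hg : Continuous g) :
    ∫ x in P, g x ∂μ = ∑ B ∈ 𝓕, ∫ x in vsolid B, g x ∂μ := by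
  have h_union : P = ⋃ B : 𝓕, vsolid (B : Finset E) :=
    hP.eq_biUnion_vsolid.trans (Set.biUnion_eq_iUnion (𝓕 : Set (Finset E)) fun B _ => vsolid B)
  conv_lhs => rw [h_union]
  rw [integral_iUnion_ae, tsum_fintype, Finset.sum_coe_sort 𝓕 (fun B => ∫ x in vsolid B, g x ∂μ)]
  · exact fun B => (hP.isVectorBasis B.2).isCompact_vsolid.measurableSet.nullMeasurableSet
  · exact fun B B' h => hP.addHaar_vsolid_inter μ B.2 B'.2 (Subtype.coe_injective.ne h)
  · exact h_union ▸ hg.continuousOn.integrableOn_compact hP.isCompact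

theorem measureReal_eq_sum_vsolid : μ.real P = ∑ B ∈ 𝓕, μ.real (vsolid B) := by
  simpa using hP.setIntegral_eq_sum_vsolid μ (continuous_const (y := (1 : ℝ)))

end IsSimplicialAround

variable {d : ℕ} {P : Set (Euc d)} {𝓕 : Finset (Finset (Euc d))} {B : Finset (Euc d)} {y k : Euc d}

namespace IsIsotropicMaximizer

variable (hP : IsIsotropicMaximizer P) (h𝓕 : IsSimplicialAround P 𝓕)
include hP h𝓕

theorem meanSqNorm_apex_le (hB : B ∈ 𝓕) (hy : 1 < sumCoord B y)
    (hy' : ∀ B' ∈ 𝓕, B' ≠ B → sumCoord B' y ≤ 1) :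
    meanSqNorm B y
      ≤ (∑ j ∈ Finset.range (d + 2),
          ((sumCoord B y - 1) * (volume.real (vsolid B) / volume.real P) + 1) ^ j)
        * ((sumCoord B y - 1) * (volume.real (vsolid B) / volume.real P) + 1) := by
  have hB_basis := h𝓕.isVectorBasis hB
  have h_vol := hB_basis.measureReal_convexHull_insert volume hy.ne'
  have h_cap : ∀ x ∈ convexHull ℝ (insert y (B : Set (Euc d))), 1 ≤ sumCoord B x :=
    convexHull_min (Set.insert_subset hy.le fun v hv => (hB_basis.sumCoord_self hv).ge)
      (convex_halfSpace_ge (sumCoord B).toLinearMap.isLinear 1)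
  have h_ne : sumCoord B ≠ 0 := fun h0 => by norm_num [h0] at hy
  have h_disj : volume (P ∩ convexHull ℝ (insert y (B : Set (Euc d)))) = 0 :=
    measure_mono_null (fun x hx => (h𝓕.sumCoord_le hB hx.1).antisymm (h_cap x hx.2))
      (addHaar_level_eq_zero volume h_ne 1)
  have h_union := h𝓕.convexHull_insert_eq hB hy'
  have h_compact := (B.finite_toSet.insert y).isCompact_convexHull ℝ
  have h_body : IsConvexBody (P ∪ convexHull ℝ (insert y (B : Set (Euc d)))) :=
    ⟨h𝓕.isCompact.union h_compact, h_union ▸ convex_convexHull ℝ _,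
      hP.isConvexBody.2.2.mono (interior_mono Set.subset_union_left)⟩
  rw [abs_sub_comm, abs_of_pos (sub_pos.2 hy)] at h_vol
  have h_pos : 0 < volume.real (convexHull ℝ (insert y (B : Set (Euc d)))) := by
    rw [h_vol]
    exact mul_pos (sub_pos.2 hy) (hB_basis.measureReal_vsolid_pos volume)
  have h := hP.integral_norm_sq_cond_le h_compact h_pos h_disj h_body
  rwa [hB_basis.integral_norm_sq_cond_convexHull_insert volume hy.ne', h_vol,
    mul_div_assoc] at h

/-- First-order optimality: push a point of the relative interior of the facet `B` outwards. -/
theorem meanSqNorm_le_of_mem_facet (hB : B ∈ 𝓕) (hy : sumCoord B y = 1)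
    (hy' : ∀ B' ∈ 𝓕, B' ≠ B → sumCoord B' y < 1) :
    meanSqNorm B y ≤ d + 2 := by
  have h_outside : ∀ᶠ t in nhds (0 : ℝ), ∀ B' ∈ 𝓕, B' ≠ B → sumCoord B' ((1 + t) • y) ≤ 1 := by
    rw [Filter.eventually_all_finset]
    intro B' hB'
    rw [Filter.eventually_imp_distrib_left]
    intro h_ne
    exact (ContinuousAt.eventually_lt (by fun_prop) continuousAt_const
      (by simpa using hy' B' hB' h_ne)).mono fun t => le_of_lt
  have h_lim : ∀ f : ℝ → ℝ, Continuous f →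
      Filter.Tendsto f (nhdsWithin 0 (Set.Ioi 0)) (nhds (f 0)) := fun f hf =>
    (hf.tendsto 0).mono_left nhdsWithin_le_nhds
  have h_le := le_of_tendsto_of_tendsto
    (h_lim (fun t => meanSqNorm B ((1 + t) • y))
      ((continuous_meanSqNorm B).comp (by fun_prop)))
    (h_lim (fun t => (∑ j ∈ Finset.range (d + 2),
        (t * (volume.real (vsolid B) / volume.real P) + 1) ^ j)
      * (t * (volume.real (vsolid B) / volume.real P) + 1)) (by fun_prop)) ?_
  · simpa using h_le
  · filter_upwards [nhdsWithin_le_nhds h_outside, self_mem_nhdsWithin] with t ht ht0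
    have h_apex : sumCoord B ((1 + t) • y) = 1 + t := by
      rw [map_smul, hy, smul_eq_mul, mul_one]
    have h := hP.meanSqNorm_apex_le h𝓕 hB (by rw [h_apex]; linarith [Set.mem_Ioi.1 ht0]) ht
    rwa [h_apex, add_sub_cancel_left] at h

theorem meanSqNorm_le (hB : B ∈ 𝓕) (hk : k ∈ B) : meanSqNorm B k ≤ d + 2 := by
  have hB_basis := h𝓕.isVectorBasis hB
  have h_card : (B.card : ℝ) = d := by rw [h𝓕.card_eq_finrank hB, finrank_euclideanSpace_fin]
  have h_sum : sumCoord B (∑ v ∈ B, v) = d := by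
    rw [map_sum, Finset.sum_congr rfl fun v hv => hB_basis.sumCoord_self hv]
    simpa using h_card
  have h_facet : ∀ᶠ t : ℝ in nhdsWithin 0 (Set.Ioi 0),
      meanSqNorm B ((1 - t * d) • k + t • ∑ v ∈ B, v) ≤ d + 2 := by
    have h_small : ∀ᶠ t : ℝ in nhds 0, t * d < 1 :=
      ContinuousAt.eventually_lt (by fun_prop) continuousAt_const (by simp)
    filter_upwards [nhdsWithin_le_nhds h_small, self_mem_nhdsWithin] with t ht ht0
    have ht0 : 0 < t := ht0
    refine hP.meanSqNorm_le_of_mem_facet h𝓕 hB ?_ fun B' hB' h_ne => ?_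
    · rw [map_add, map_smul, map_smul, hB_basis.sumCoord_self hk, h_sum, smul_eq_mul, smul_eq_mul]
      ring
    · have h_lt := h𝓕.sumCoord_sum_lt hB hB' subset_rfl fun h =>
        h_ne (h𝓕.eq_of_subset hB hB' h).symm
      have h_le := h𝓕.sumCoord_le hB' (h𝓕.subset hB hk)
      rw [h_card] at h_lt
      rw [map_add, map_smul, map_smul, smul_eq_mul, smul_eq_mul]
      nlinarith
  have h_cont : Continuous fun t : ℝ => meanSqNorm B ((1 - t * d) • k + t • ∑ v ∈ B, v) :=
    (continuous_meanSqNorm B).comp (by fun_prop)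
  simpa using le_of_tendsto ((h_cont.tendsto 0).mono_left nhdsWithin_le_nhds) h_facet

theorem meanSqNorm_zero_le (hB : B ∈ 𝓕) : meanSqNorm B 0 ≤ d := by
  have h_card : B.card = d := by rw [h𝓕.card_eq_finrank hB, finrank_euclideanSpace_fin]
  have h_sum := Finset.sum_le_sum fun k hk => hP.meanSqNorm_le h𝓕 hB hk
  rw [sum_meanSqNorm, Finset.sum_const, nsmul_eq_mul, h_card, mul_comm (d : ℝ)] at h_sum
  exact le_of_mul_le_mul_left h_sum (by positivity)

/-- The mean of `‖x‖ ^ 2` over `P` is `d`, and over each of the pieces `vsolid B` it is at most `d`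
by the first-order conditions. -/
theorem meanSqNorm_zero_eq (hB : B ∈ 𝓕) : meanSqNorm B 0 = d := by
  have h_le : ∀ B ∈ 𝓕, volume.real (vsolid B) * meanSqNorm B 0 ≤ volume.real (vsolid B) * d :=
    fun B hB => mul_le_mul_of_nonneg_left (hP.meanSqNorm_zero_le h𝓕 hB) measureReal_nonneg
  have h_mean : ∫ x in P, ‖x‖ ^ 2 = volume.real P * d := by
    rw [← hP.integral_norm_sq_cond, integral_cond_eq, mul_inv_cancel_left₀ hP.measureReal_pos.ne']
  rw [h𝓕.setIntegral_eq_sum_vsolid volume (by fun_prop), h𝓕.measureReal_eq_sum_vsolid volume,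
    Finset.sum_mul, Finset.sum_congr rfl fun B hB =>
      (h𝓕.isVectorBasis hB).setIntegral_vsolid_norm_sq volume] at h_mean
  exact mul_left_cancel₀ ((h𝓕.isVectorBasis hB).measureReal_vsolid_pos volume).ne'
    ((Finset.sum_eq_sum_iff_of_le h_le).1 h_mean B hB)

theorem vertex_equation (hB : B ∈ 𝓕) (hk : k ∈ B) :
    ⟪k, ∑ v ∈ B, v⟫ + ‖k‖ ^ 2 = ((d : ℝ) + 1) * ((d : ℝ) + 2) := by
  have h_card : B.card = d := by rw [h𝓕.card_eq_finrank hB, finrank_euclideanSpace_fin]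
  have h_zero := hP.meanSqNorm_zero_eq h𝓕 hB
  have h_sum : ∑ k ∈ B, meanSqNorm B k = ∑ k ∈ B, ((d : ℝ) + 2) := by
    rw [sum_meanSqNorm, h_zero, Finset.sum_const, nsmul_eq_mul, h_card, mul_comm]
  have h_eq := (Finset.sum_eq_sum_iff_of_le fun k hk => hP.meanSqNorm_le h𝓕 hB hk).1 h_sum k hk
  have h_sub := meanSqNorm_sub_meanSqNorm_zero B k
  rw [h_eq, h_zero, h_card, eq_div_iff (by positivity)] at h_sub
  linarith

end IsIsotropicMaximizer

end VertexEquation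

section Mirror

variable {E : Type*} [NormedAddCommGroup E] [InnerProductSpace ℝ E] [DecidableEq E]
  {B G : Finset E} {k r r' x : E}

/-- The orthogonal reflection in the hyperplane spanned by `B ∖ {r}`, for a vector basis `B` of `E`
and a vertex `r` of it. -/
def mirror (B : Finset E) (r : E) : E ≃ₗᵢ[ℝ] E :=
  (Submodule.span ℝ (↑(B.erase r) : Set E)).reflection

theorem mirror_apply_of_mem_erase (hk : k ∈ B.erase r) : mirror B r k = k :=
  Submodule.reflection_mem_subspace_eq_self (Submodule.subset_span hk)

theorem image_mirror_eq_insert (hr : r ∈ B) :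
    B.image (mirror B r) = insert (mirror B r r) (B.erase r) := by
  have h_fix : (B.erase r).image (mirror B r) = (B.erase r).image id :=
    Finset.image_congr fun _ hk => mirror_apply_of_mem_erase hk
  calc B.image (mirror B r) = (insert r (B.erase r)).image (mirror B r) := by
        rw [Finset.insert_erase hr]
    _ = insert (mirror B r r) (B.erase r) := by rw [Finset.image_insert, h_fix, Finset.image_id]

theorem mirror_image_apply (φ : E ≃ₗᵢ[ℝ] E) :
    mirror (B.image φ) (φ r) (φ x) = φ (mirror B r x) := by
  have h_span : Submodule.span ℝ (↑((B.image φ).erase (φ r)) : Set E)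
      = (Submodule.span ℝ (↑(B.erase r) : Set E)).map (φ.toLinearEquiv : E →ₗ[ℝ] E) := by
    rw [Submodule.map_span, ← Finset.image_erase φ.injective, Finset.coe_image]
    rfl
  simp only [mirror, h_span]
  exact (Submodule.reflection_map_apply φ _ (φ x)).trans (by simp)

variable [FiniteDimensional ℝ E]

namespace IsVectorBasis

theorem span_erase_eq_orthogonal (hB : IsVectorBasis B) (hr : r ∈ B) {z : E} (hz : z ≠ 0)
    (h_inner : ∀ u ∈ B.erase r, ⟪z, u⟫ = 0) :
    Submodule.span ℝ (↑(B.erase r) : Set E) = (ℝ ∙ z)ᗮ := by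
  refine Submodule.eq_of_le_of_finrank_eq (Submodule.span_le.2 fun u hu => ?_) ?_
  · exact Submodule.mem_orthogonal_singleton_iff_inner_right.2 (h_inner u hu)
  · have h_indep : LinearIndepOn ℝ id (B : Set E) := hB.linearIndependent
    have h_card : Module.finrank ℝ (Submodule.span ℝ (↑(B.erase r) : Set E)) = B.card - 1 :=
      (finrank_span_finset_eq_card (h_indep.mono (Finset.coe_subset.2
        (Finset.erase_subset r B)))).trans (Finset.card_erase_of_mem hr)
    have h_compl := Submodule.finrank_add_finrank_orthogonal (ℝ ∙ z)
    rw [finrank_span_singleton hz, ← hB.card_eq_finrank] at h_compl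
    omega

theorem mirror_eq (hB : IsVectorBasis B) (hr : r ∈ B) (h_ne : r ≠ r') (h_norm : ‖r‖ = ‖r'‖)
    (h_inner : ∀ u ∈ B.erase r, ⟪u, r⟫ = ⟪u, r'⟫) : mirror B r r = r' := by
  have h_span := hB.span_erase_eq_orthogonal hr (sub_ne_zero.2 h_ne) fun u hu => by
    rw [real_inner_comm, inner_sub_right, h_inner u hu, sub_self]
  simp only [mirror, h_span]
  exact Submodule.reflection_sub h_norm

end IsVectorBasis

namespace IsSimplicialAround

variable {P : Set E} {𝓕 : Finset (Finset E)} {c : ℝ} (hP : IsSimplicialAround P 𝓕)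
  (h_eq : ∀ B ∈ 𝓕, ∀ k ∈ B, ⟪k, ∑ v ∈ B, v⟫ + ‖k‖ ^ 2 = c)
include hP h_eq

theorem exists_neighbor_mirror (hG : G ∈ 𝓕) (hr : r ∈ G) :
    insert (mirror G r r) (G.erase r) ∈ 𝓕 ∧ vcoord G r (mirror G r r) < 0 := by
  obtain ⟨r', hG', h_neg⟩ := hP.exists_neighbor hG hr
  have hG_basis := hP.isVectorBasis hG
  have h_ne : r ≠ r' := fun h => by
    rw [← h, hG_basis.vcoord_self hr] at h_neg
    linarith
  have h_notMem : r' ∉ G.erase r := fun h => by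
    rw [hG_basis.vcoord_of_ne hr (Finset.mem_of_mem_erase h) (Finset.ne_of_mem_erase h).symm]
      at h_neg
    exact h_neg.false
  have h_eq_G : ∀ k ∈ G, ⟪k, r + ∑ v ∈ G.erase r, v⟫ + ‖k‖ ^ 2 = c := fun k hk => by
    rw [Finset.add_sum_erase G (fun v => v) hr]
    exact h_eq G hG k hk
  have h_eq_G' : ∀ k ∈ insert r' (G.erase r), ⟪k, r' + ∑ v ∈ G.erase r, v⟫ + ‖k‖ ^ 2 = c :=
    fun k hk => by
      rw [← Finset.sum_insert h_notMem (f := fun v => v)]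
      exact h_eq _ hG' k hk
  have h_inner : ∀ u ∈ G.erase r, ⟪u, r⟫ = ⟪u, r'⟫ := fun u hu => by
    have h := h_eq_G u (Finset.mem_of_mem_erase hu)
    have h' := h_eq_G' u (Finset.mem_insert_of_mem hu)
    rw [inner_add_right] at h h'
    linarith
  have h_inner_sum : ⟪r, ∑ v ∈ G.erase r, v⟫ = ⟪r', ∑ v ∈ G.erase r, v⟫ := by
    rw [inner_sum, inner_sum]
    exact Finset.sum_congr rfl fun u hu => by rw [real_inner_comm, h_inner u hu, real_inner_comm]
  have h_norm : ‖r‖ = ‖r'‖ := by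
    have h := h_eq_G r hr
    have h' := h_eq_G' r' (Finset.mem_insert_self r' _)
    rw [inner_add_right, real_inner_self_eq_norm_sq] at h h'
    exact (pow_left_inj₀ (norm_nonneg r) (norm_nonneg r') two_ne_zero).1 (by linarith)
  rw [hG_basis.mirror_eq hr h_ne h_norm h_inner]
  exact ⟨hG', h_neg⟩

/-- The neighbours of a facet are determined by the facet, so an isometry that maps one facet to a
facet maps its neighbours to facets too, and by connectedness all facets. -/
theorem image_mem_of_image_mem (φ : E ≃ₗᵢ[ℝ] E) (hG : G ∈ 𝓕) (hφG : G.image φ ∈ 𝓕)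
    (hB : B ∈ 𝓕) : B.image φ ∈ 𝓕 := by
  have h_all : 𝓕.filter (fun G => G.image φ ∈ 𝓕) = 𝓕 := by
    refine hP.eq_of_forall_neighbor (Finset.filter_subset _ 𝓕) ⟨G, by simp [hG, hφG]⟩
      fun G hG r hr => ⟨mirror G r r, ?_, ?_⟩
    · obtain ⟨hG, hφG⟩ := Finset.mem_filter.1 hG
      refine Finset.mem_filter.2 ⟨(hP.exists_neighbor_mirror h_eq hG hr).1, ?_⟩
      rw [Finset.image_insert, ← mirror_image_apply, Finset.image_erase φ.injective]
      exact (hP.exists_neighbor_mirror h_eq hφG (Finset.mem_image_of_mem φ hr)).1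
    · exact (hP.exists_neighbor_mirror h_eq (Finset.mem_filter.1 hG).1 hr).2
  rw [← h_all] at hB
  exact (Finset.mem_filter.1 hB).2

theorem mirror_mem (hG : G ∈ 𝓕) (hr : r ∈ G) (hx : x ∈ P) : mirror G r x ∈ P := by
  rw [hP.eq_biUnion_vsolid] at hx
  obtain ⟨B, hB, hx⟩ := Set.mem_iUnion₂.1 hx
  have h_image : B.image (mirror G r) ∈ 𝓕 :=
    hP.image_mem_of_image_mem h_eq _ hG
      (image_mirror_eq_insert hr ▸ (hP.exists_neighbor_mirror h_eq hG hr).1) hB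
  refine hP.vsolid_subset h_image ?_
  rw [(hP.isVectorBasis hB).vsolid_eq_convexHull] at hx
  rw [(hP.isVectorBasis h_image).vsolid_eq_convexHull, Finset.coe_image,
    ← map_zero (mirror G r), ← Set.image_insert_eq]
  exact (mirror G r).toLinearEquiv.toLinearMap.image_convexHull _ ▸ Set.mem_image_of_mem _ hx

end IsSimplicialAround

end Mirror

section LineShear

variable {E : Type*} [NormedAddCommGroup E] [NormedSpace ℝ E] [FiniteDimensional ℝ E]
  [MeasurableSpace E] [BorelSpace E] (μ : Measure E) [μ.IsAddHaarMeasure] {g : E → ℝ} {n : E}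

/-- Averaging over the line through `x` in direction `n`, with a weight that cuts out one segment of
it, makes the shear invisible: it translates every such line. -/
theorem lintegral_comp_add_smul (hg : Measurable g) (h_inv : ∀ x (t : ℝ), g (x + t • n) = g x)
    {l : StrongDual ℝ E} (hl : l n = 1) {φ : E → ENNReal} (hφ : Measurable φ) {w : ℝ → ENNReal}
    (hw : Measurable w) (hw_one : ∫⁻ t, w t = 1) :
    ∫⁻ x, φ (x + g x • n) ∂μ = ∫⁻ x, w (l x) * (∫⁻ t : ℝ, φ (x + t • n)) ∂μ := by
  calc ∫⁻ x, φ (x + g x • n) ∂μ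
      = ∫⁻ x, (∫⁻ t : ℝ, φ (x + g x • n) * w (l x - t)) ∂μ := by
        refine lintegral_congr fun x => ?_
        rw [lintegral_const_mul _ (by fun_prop), lintegral_sub_left_eq_self w, hw_one, mul_one]
    _ = ∫⁻ t : ℝ, (∫⁻ x, φ (x + g x • n) * w (l x - t) ∂μ) :=
        lintegral_lintegral_swap (by fun_prop)
    _ = ∫⁻ t : ℝ, (∫⁻ x, w (l x) * φ (x + (g x + t) • n) ∂μ) := by
        refine lintegral_congr fun t => ?_
        rw [← lintegral_add_right_eq_self _ (t • n)]
        refine lintegral_congr fun x => ?_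
        rw [h_inv, map_add, map_smul, hl, smul_eq_mul, mul_one, add_sub_cancel_right, mul_comm,
          add_smul, add_right_comm, add_assoc]
    _ = ∫⁻ x, (∫⁻ t : ℝ, w (l x) * φ (x + (g x + t) • n)) ∂μ :=
        lintegral_lintegral_swap (by fun_prop)
    _ = ∫⁻ x, w (l x) * (∫⁻ t : ℝ, φ (x + t • n)) ∂μ := by
        refine lintegral_congr fun x => ?_
        rw [lintegral_const_mul _ (by fun_prop),
          lintegral_add_left_eq_self (fun t => φ (x + t • n)) (g x)]

theorem measurePreserving_add_smul (hg : Measurable g)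
    (h_inv : ∀ x (t : ℝ), g (x + t • n) = g x) :
    MeasurePreserving (fun x => x + g x • n) μ μ := by
  rcases eq_or_ne n 0 with rfl | hn
  · simpa using! MeasurePreserving.id μ
  obtain ⟨l, hl⟩ := SeparatingDual.exists_eq_one (R := ℝ) hn
  have hw : Measurable ((Set.Icc (0 : ℝ) 1).indicator (1 : ℝ → ENNReal)) :=
    measurable_one.indicator measurableSet_Icc
  have hw_one : ∫⁻ t : ℝ, (Set.Icc (0 : ℝ) 1).indicator (1 : ℝ → ENNReal) t = 1 := by
    simp [lintegral_indicator_one measurableSet_Icc]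
  refine ⟨by fun_prop, Measure.ext_of_lintegral _ fun φ hφ => ?_⟩
  have h_id := lintegral_comp_add_smul μ (g := 0) measurable_const (fun _ _ => rfl) hl hφ hw hw_one
  simp only [Pi.zero_apply, zero_smul, add_zero] at h_id
  rw [lintegral_map hφ (by fun_prop), lintegral_comp_add_smul μ hg h_inv hl hφ hw hw_one, h_id]

end LineShear

section HalfChord

theorem eq_Icc_of_forall_neg_mem {C : Set ℝ} (hC : IsCompact C) (h_conv : Convex ℝ C)
    (h_ne : C.Nonempty) (h_neg : ∀ s ∈ C, -s ∈ C) :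
    C = Set.Icc (-(volume.real C / 2)) (volume.real C / 2) := by
  obtain ⟨u, hu, h_max⟩ := hC.exists_isMaxOn h_ne continuousOn_id
  have h_eq : C = Set.Icc (-u) u :=
    subset_antisymm (fun s hs => ⟨neg_le.1 (h_max (h_neg s hs)), h_max hs⟩)
      (h_conv.ordConnected.out (h_neg u hu) hu)
  have h_nonneg : -u ≤ u := h_max (h_neg u hu)
  have h_vol : volume.real C / 2 = u := by
    rw [h_eq, Real.volume_real_Icc_of_le h_nonneg]
    ring
  rwa [h_vol]

variable {E : Type*} [NormedAddCommGroup E] [InnerProductSpace ℝ E] {P : Set E} {n x : E}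

/-- Half the length of the chord cut out of `P` by the line through `x` with unit direction `n`. -/
def halfChord (P : Set E) (n x : E) : ℝ := volume.real {t : ℝ | x + t • n ∈ P} / 2

theorem halfChord_add_smul (x : E) (t : ℝ) : halfChord P n (x + t • n) = halfChord P n x := by
  have h_preimage : {s : ℝ | x + t • n + s • n ∈ P} = (t + ·) ⁻¹' {s : ℝ | x + s • n ∈ P} := by
    ext s
    simp only [Set.mem_ofPred_eq, Set.mem_preimage, add_smul, add_assoc]
  rw [halfChord, h_preimage, Measure.real, measure_preimage_add, ← Measure.real, halfChord]

theorem measurable_halfChord [SecondCountableTopology E] [MeasurableSpace E] [BorelSpace E]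
    (hP : MeasurableSet P) :
    Measurable (halfChord P n) := by
  have h_meas : MeasurableSet {p : E × ℝ | p.1 + p.2 • n ∈ P} :=
    (Continuous.measurable (by fun_prop)) hP
  exact (measurable_measure_prodMk_left h_meas).ennreal_toReal.div_const 2

theorem reflection_orthogonal_singleton_apply (hn : ‖n‖ = 1) (x : E) :
    (ℝ ∙ n)ᗮ.reflection x = x - (2 * ⟪n, x⟫) • n := by
  rw [Submodule.reflection_orthogonal_apply, Submodule.reflection_singleton_apply, hn]
  simp
  module

section Symmetric

variable (hP : IsCompact P) (h_conv : Convex ℝ P) (hn : ‖n‖ = 1)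
  (h_symm : ∀ x ∈ P, (ℝ ∙ n)ᗮ.reflection x ∈ P)
include hP h_conv hn h_symm

theorem setOf_add_smul_mem_eq_Icc (hx : x ∈ P) :
    {s : ℝ | x + (s - ⟪n, x⟫) • n ∈ P} = Set.Icc (-halfChord P n x) (halfChord P n x) := by
  have h_isometry : Isometry fun s : ℝ => x + (s - ⟪n, x⟫) • n :=
    Isometry.of_dist_eq fun s t => by
      rw [dist_add_left, dist_eq_norm, ← sub_smul, norm_smul, hn, mul_one, sub_sub_sub_cancel_right,
        dist_eq_norm]
  have h_shift : {s : ℝ | x + (s - ⟪n, x⟫) • n ∈ P}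
      = {t : ℝ | x - ⟪n, x⟫ • n + t • n ∈ P} := by
    ext s
    rw [Set.mem_ofPred_eq, Set.mem_ofPred_eq]
    congr! 1
    module
  have h_half : volume.real {s : ℝ | x + (s - ⟪n, x⟫) • n ∈ P} / 2 = halfChord P n x := by
    rw [h_shift, ← halfChord, sub_eq_add_neg, ← neg_smul, halfChord_add_smul]
  rw [← h_half]
  refine eq_Icc_of_forall_neg_mem (h_isometry.isClosedEmbedding.isCompact_preimage hP) ?_
    ⟨⟪n, x⟫, by simpa using hx⟩ fun s hs => ?_
  · intro s hs t ht a b ha hb hab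
    rw [Set.mem_ofPred_eq]
    convert h_conv hs ht ha hb hab using 1
    obtain rfl : b = 1 - a := by linarith
    simp only [smul_eq_mul]
    module
  · rw [Set.mem_ofPred_eq]
    convert h_symm _ hs using 1
    rw [reflection_orthogonal_singleton_apply hn, inner_add_right, inner_smul_right,
      real_inner_self_eq_norm_sq, hn]
    module

theorem abs_inner_le_halfChord (hx : x ∈ P) : |⟪n, x⟫| ≤ halfChord P n x := by
  have h_mem : ⟪n, x⟫ ∈ {s : ℝ | x + (s - ⟪n, x⟫) • n ∈ P} := by simpa using hx
  rw [setOf_add_smul_mem_eq_Icc hP h_conv hn h_symm hx] at h_mem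
  exact abs_le.2 h_mem

theorem add_smul_mem_of_abs_le_halfChord (hx : x ∈ P) {s : ℝ} (hs : |s| ≤ halfChord P n x) :
    x + (s - ⟪n, x⟫) • n ∈ P :=
  (setOf_add_smul_mem_eq_Icc hP h_conv hn h_symm hx).ge (abs_le.1 hs)

end Symmetric

end HalfChord

section Regression

open ProbabilityTheory

theorem covariance_eq_zero_of_measurePreserving {Ω : Type*} [MeasurableSpace Ω] {μ : Measure Ω}
    {T : Ω → Ω} {f g : Ω → ℝ} (hT : MeasurePreserving T μ μ) (hf : AEStronglyMeasurable f μ)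
    (hg : AEStronglyMeasurable g μ) (h_even : ∀ x, f (T x) = f x) (h_odd : ∀ x, g (T x) = -g x) :
    cov[f, g; μ] = 0 := by
  have h_map : cov[f, g; μ] = cov[fun x => f (T x), fun x => g (T x); μ] := by
    conv_lhs => rw [← hT.map_eq]
    exact covariance_map_fun (hT.map_eq.symm ▸ hf) (hT.map_eq.symm ▸ hg) hT.measurable.aemeasurable
  simp only [h_even, h_odd, covariance_fun_neg_right] at h_map
  linarith

theorem measurePreserving_cond {Ω : Type*} [MeasurableSpace Ω] {μ : Measure Ω} {T : Ω → Ω}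
    {K Q : Set Ω} (hT : MeasurePreserving T μ μ) (hQ : MeasurableSet Q) (h_preimage : T ⁻¹' Q = K) :
    MeasurePreserving T (μ[|K]) (μ[|Q]) := by
  subst h_preimage
  rw [ProbabilityTheory.cond, ProbabilityTheory.cond, hT.measure_preimage hQ.nullMeasurableSet]
  exact (hT.restrict_preimage hQ).smul_measure _

variable {d : ℕ} {K : Set (Euc d)} {g : Euc d → ℝ} {n : Euc d}

/-- The vector of covariances of `g` with the coordinates on `K`. If `K` is isotropic, then
`⟪covVector K g, ·⟫` is the linear part of the least-squares fit to `g` on `K`. -/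
def covVector (K : Set (Euc d)) (g : Euc d → ℝ) : Euc d :=
  WithLp.toLp 2 fun i => cov[g, fun x => x i; volume[|K]]

theorem inner_eq_sum_mul (a x : Euc d) : ⟪a, x⟫ = ∑ i, a i * x i := by
  simp [PiLp.inner_apply, mul_comm]

variable (hK : IsCompact K) (hg : MemLp g 2 (volume[|K]))
include hK hg

theorem covariance_inner_right (a : Euc d) :
    cov[g, fun x => ⟪a, x⟫; volume[|K]] = ⟪a, covVector K g⟫ := by
  simp_rw [inner_eq_sum_mul]
  rw [covariance_fun_sum_right (fun i => (memLp_euc_apply hK i 2).const_mul _) hg]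
  simp_rw [covariance_const_mul_right]
  rfl

theorem covariance_sub_inner_covVector (h_iso : covMatrix K = 1) (i : Fin d) :
    cov[fun x => g x - ⟪covVector K g, x⟫, fun x => x i; volume[|K]] = 0 := by
  have h_inner : cov[fun x => ⟪covVector K g, x⟫, fun x => x i; volume[|K]] = covVector K g i := by
    rw [covariance_comm, covariance_inner_right hK (memLp_euc_apply hK i 2), inner_eq_sum_mul]
    simp [covVector, ← covMatrix_apply hK, h_iso, Matrix.one_apply]
  rw [covariance_fun_sub_left hg (memLp_cond_of_isCompact hK (by fun_prop) 2)
    (memLp_euc_apply hK i 2), h_inner]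
  exact sub_self _

theorem covMatrix_of_measurePreserving_add_smul {Q : Set (Euc d)} (hQ : IsCompact Q)
    (h_uncorr : ∀ i, cov[g, fun x => x i; volume[|K]] = 0)
    (hT : MeasurePreserving (fun x => x + g x • n) (volume[|K]) (volume[|Q])) :
    covMatrix Q = covMatrix K + Var[g; volume[|K]] • Matrix.vecMulVec n n := by
  ext i j
  have h_smul : ∀ k, MemLp (fun x => g x * n k) 2 (volume[|K]) := fun k => hg.mul_const _
  have h_map : covMatrix Q i j
      = cov[(fun x => x i) + fun x => g x * n i, (fun x => x j) + fun x => g x * n j;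
          volume[|K]] := by
    rw [covMatrix_apply hQ, ← hT.map_eq]
    exact covariance_map_fun (continuous_euc_apply i).aestronglyMeasurable
      (continuous_euc_apply j).aestronglyMeasurable hT.measurable.aemeasurable
  have h_left : ∀ k, cov[fun x => x k, g; volume[|K]] = 0 := fun k => by
    rw [covariance_comm, h_uncorr]
  have h_coord := fun k => memLp_euc_apply hK k 2
  rw [h_map, covariance_add_left (h_coord i) (h_smul i) ((h_coord j).add (h_smul j)),
    covariance_add_right (h_coord i) (h_coord j) (h_smul j),
    covariance_add_right (h_smul i) (h_coord j) (h_smul j)]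
  simp only [covariance_mul_const_left, covariance_mul_const_right, h_left, h_uncorr,
    ← covMatrix_apply hK, covariance_self hg.aemeasurable, Matrix.add_apply, Matrix.smul_apply,
    Matrix.vecMulVec_apply, smul_eq_mul]
  ring

end Regression

section Symmetrization

open ProbabilityTheory

section InnerProductSpace

variable {E : Type*} [NormedAddCommGroup E] [InnerProductSpace ℝ E] {P : Set E} {n v : E}

theorem injective_add_smul {g : E → ℝ} (h_inv : ∀ x (t : ℝ), g (x + t • n) = g x) :
    Function.Injective fun x => x + g x • n := fun x y h => by
  have h_eq : y = x + (g x - g y) • n := by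
    rw [sub_smul, add_sub_assoc', eq_sub_iff_add_eq]
    exact h.symm
  have hg : g y = g x := by rw [h_eq, h_inv]
  simpa [hg] using h_eq.symm

theorem inner_add_smul_self (hn : ‖n‖ = 1) (x : E) (t : ℝ) : ⟪n, x + t • n⟫ = ⟪n, x⟫ + t := by
  rw [inner_add_right, inner_smul_right, real_inner_self_eq_norm_sq, hn, one_pow, mul_one]

/-- The shear moves a chord `[-h, h]` to `[0, 2 h]`, up to an affine function, and the upper half
`[0, h]` is moved there by a linear map. -/
theorem image_add_halfChord_smul_eq (hP : IsCompact P) (h_conv : Convex ℝ P) (hn : ‖n‖ = 1)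
    (h_symm : ∀ x ∈ P, (ℝ ∙ n)ᗮ.reflection x ∈ P) (hv : ⟪v, n⟫ = 0) :
    (fun x => x + (halfChord P n x - ⟪v, x⟫) • n) '' P
      = (fun x => x + (⟪n, x⟫ - ⟪v, x⟫) • n) '' (P ∩ {x | 0 ≤ ⟪n, x⟫}) := by
  have h_move : ∀ x ∈ P, ∀ s : ℝ, |s| ≤ halfChord P n x →
      ∃ y ∈ P, ⟪n, y⟫ = s ∧ ⟪v, y⟫ = ⟪v, x⟫
        ∧ halfChord P n y = halfChord P n x ∧ y = x + (s - ⟪n, x⟫) • n := fun x hx s hs =>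
    ⟨_, add_smul_mem_of_abs_le_halfChord hP h_conv hn h_symm hx hs,
      by rw [inner_add_smul_self hn, add_sub_cancel],
      by rw [inner_add_right, inner_smul_right, hv, mul_zero, add_zero],
      halfChord_add_smul _ _, rfl⟩
  have h_abs := fun x (hx : x ∈ P) => abs_le.1 (abs_inner_le_halfChord hP h_conv hn h_symm hx)
  refine subset_antisymm ?_ ?_
  · rintro _ ⟨x, hx, rfl⟩
    obtain ⟨h_lower, h_upper⟩ := h_abs x hx
    obtain ⟨y, hy, hy_inner, hy_v, -, rfl⟩ := h_move x hx ((⟪n, x⟫ + halfChord P n x) / 2)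
      (abs_le.2 ⟨by linarith, by linarith⟩)
    refine ⟨_, ⟨hy, by rw [Set.mem_ofPred_eq, hy_inner]; linarith⟩, ?_⟩
    simp only [hy_inner, hy_v]
    module
  · rintro _ ⟨y, ⟨hy, hy_nonneg⟩, rfl⟩
    obtain ⟨h_lower, h_upper⟩ := h_abs y hy
    rw [Set.mem_ofPred_eq] at hy_nonneg
    obtain ⟨x, hx, -, hx_v, hx_half, rfl⟩ := h_move y hy (2 * ⟪n, y⟫ - halfChord P n y)
      (abs_le.2 ⟨by linarith, by linarith⟩)
    refine ⟨_, hx, ?_⟩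
    simp only [hx_v, hx_half]
    module

end InnerProductSpace

theorem isConvexBody_of_measure_ne_zero {d : ℕ} {K : Set (Euc d)} (hK : IsCompact K)
    (h_conv : Convex ℝ K) (h0 : volume K ≠ 0) : IsConvexBody K := by
  refine ⟨hK, h_conv, Set.nonempty_iff_ne_empty.2 fun h_empty => h0 ?_⟩
  have h_frontier : K = frontier K := by rw [hK.isClosed.frontier_eq, h_empty, Set.sdiff_empty]
  rw [h_frontier]
  exact h_conv.addHaar_frontier volume

theorem IsConvexBody.subset_of_ae_mem {d : ℕ} {K C : Set (Euc d)} (hK : IsConvexBody K)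
    (hC : IsClosed C) (h_ae : ∀ᵐ x ∂volume[|K], x ∈ C) : K ⊆ C := by
  have h_diff_open : IsOpen (interior K \ C) := isOpen_interior.sdiff hC
  have h_diff_null : volume (interior K \ C) = 0 := by
    have h_ae' : ∀ᵐ x ∂volume, x ∈ K → x ∈ C := (ae_restrict_iff' hK.1.measurableSet).1
      ((absolutelyContinuous_restrict_cond volume hK.1).ae_le h_ae)
    refine measure_mono_null (fun x hx => ?_) (ae_iff.1 h_ae')
    exact fun h => hx.2 (h (interior_subset hx.1))
  have h_interior : interior K ⊆ C :=
    Set.sdiff_eq_empty.1 (h_diff_open.measure_eq_zero_iff volume |>.1 h_diff_null)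
  calc K ⊆ closure K := subset_closure
    _ = closure (interior K) :=
      (hK.2.1.closure_interior_eq_closure_of_nonempty_interior hK.2.2).symm
    _ ⊆ C := closure_minimal h_interior hC

section Symmetric

variable {d : ℕ} {P : Set (Euc d)} {n : Euc d} (hP : IsCompact P) (h_conv : Convex ℝ P)
  (hn : ‖n‖ = 1) (h_symm : ∀ x ∈ P, (ℝ ∙ n)ᗮ.reflection x ∈ P)
include hP h_conv hn h_symm

theorem memLp_halfChord : MemLp (halfChord P n) 2 (volume[|P]) := by
  obtain ⟨R, hR⟩ := hP.isBounded.exists_norm_le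
  refine MemLp.of_bound (measurable_halfChord hP.measurableSet).aestronglyMeasurable R ?_
  filter_upwards [ae_cond_mem hP.measurableSet] with x hx
  have h_nonneg : 0 ≤ halfChord P n x :=
    (abs_nonneg _).trans (abs_inner_le_halfChord hP h_conv hn h_symm hx)
  calc ‖halfChord P n x‖ = |⟪n, x + (halfChord P n x - ⟪n, x⟫) • n⟫| := by
        rw [inner_add_smul_self hn, add_sub_cancel, Real.norm_eq_abs]
    _ ≤ ‖n‖ * ‖x + (halfChord P n x - ⟪n, x⟫) • n‖ := abs_real_inner_le_norm _ _
    _ ≤ R := by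
        rw [hn, one_mul]
        exact hR _ (add_smul_mem_of_abs_le_halfChord hP h_conv hn h_symm hx
          (abs_of_nonneg h_nonneg).le)

theorem inner_covVector_halfChord : ⟪covVector P (halfChord P n), n⟫ = 0 := by
  have h_preimage : (ℝ ∙ n)ᗮ.reflection ⁻¹' P = P :=
    subset_antisymm (fun x hx => by simpa using h_symm _ hx) h_symm
  rw [real_inner_comm,
    ← covariance_inner_right hP (memLp_halfChord hP h_conv hn h_symm)]
  refine covariance_eq_zero_of_measurePreserving
    (measurePreserving_cond (ℝ ∙ n)ᗮ.reflection.measurePreserving hP.measurableSet h_preimage)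
    (measurable_halfChord hP.measurableSet).aestronglyMeasurable
    (Continuous.aestronglyMeasurable (by fun_prop)) (fun x => ?_) fun x => ?_
  · rw [reflection_orthogonal_singleton_apply hn, sub_eq_add_neg, ← neg_smul, halfChord_add_smul]
  · rw [reflection_orthogonal_singleton_apply hn, sub_eq_add_neg, ← neg_smul,
      inner_add_smul_self hn]
    ring

theorem halfChord_eq_of_ae_eq (h_int : (interior P).Nonempty) {f : Euc d → ℝ}
    (hf : Continuous f) (hf_inv : ∀ x (t : ℝ), f (x + t • n) = f x)
    (h_ae : ∀ᵐ x ∂volume[|P], halfChord P n x = f x) {x : Euc d} (hx : x ∈ P) :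
    halfChord P n x = f x := by
  have h_subset : P ⊆ {x | ⟪n, x⟫ ≤ f x ∧ x + (f x - ⟪n, x⟫) • n ∈ P} := by
    refine IsConvexBody.subset_of_ae_mem ⟨hP, h_conv, h_int⟩ ?_ ?_
    · exact (isClosed_le (by fun_prop) hf).inter (hP.isClosed.preimage (by fun_prop))
    · filter_upwards [h_ae, ae_cond_mem hP.measurableSet] with y hy hy_mem
      have h_abs := abs_inner_le_halfChord hP h_conv hn h_symm hy_mem
      have h_nonneg := (abs_nonneg _).trans h_abs
      exact ⟨hy ▸ (le_abs_self _).trans h_abs,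
        hy ▸ add_smul_mem_of_abs_le_halfChord hP h_conv hn h_symm hy_mem
          (abs_of_nonneg h_nonneg).le⟩
  have h_nonneg : 0 ≤ halfChord P n x :=
    (abs_nonneg _).trans (abs_inner_le_halfChord hP h_conv hn h_symm hx)
  refine le_antisymm ?_ ?_
  · have h_top := (h_subset (add_smul_mem_of_abs_le_halfChord hP h_conv hn h_symm hx
      (abs_of_nonneg h_nonneg).le)).1
    rwa [inner_add_smul_self hn, add_sub_cancel, hf_inv] at h_top
  · have h_top := abs_inner_le_halfChord hP h_conv hn h_symm (h_subset hx).2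
    rw [inner_add_smul_self hn, add_sub_cancel, halfChord_add_smul] at h_top
    exact (le_abs_self _).trans h_top

end Symmetric

namespace IsIsotropicMaximizer

variable {d : ℕ} {P : Set (Euc d)} {n : Euc d} (hP : IsIsotropicMaximizer P) (hn : ‖n‖ = 1)
include hP hn

/-- The sheared body has the same volume, and the covariance matrix `1 + Var[g] n nᵀ`. -/
theorem variance_eq_zero_of_convex_image {g : Euc d → ℝ} (hg : Measurable g)
    (hg_memLp : MemLp g 2 (volume[|P])) (h_inv : ∀ x (t : ℝ), g (x + t • n) = g x)
    (h_uncorr : ∀ i, cov[g, fun x => x i; volume[|P]] = 0)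
    (h_compact : IsCompact ((fun x => x + g x • n) '' P))
    (h_conv : Convex ℝ ((fun x => x + g x • n) '' P)) :
    Var[g; volume[|P]] = 0 := by
  set T : Euc d → Euc d := fun x => x + g x • n
  have h_preserving : MeasurePreserving T volume volume :=
    measurePreserving_add_smul volume hg h_inv
  have h_preimage : T ⁻¹' (T '' P) = P := (injective_add_smul h_inv).preimage_image P
  have h_volume : volume (T '' P) = volume P := by
    rw [← h_preserving.measure_preimage h_compact.measurableSet.nullMeasurableSet, h_preimage]
  have h_pos := hP.measureReal_pos
  have h_body : IsConvexBody (T '' P) := isConvexBody_of_measure_ne_zero h_compact h_conv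
    (h_volume ▸ fun h0 => by simp [Measure.real, h0] at h_pos)
  have h_cov : covMatrix (T '' P) = 1 + Var[g; volume[|P]] • Matrix.vecMulVec n n := by
    rw [← hP.isIsotropic.2]
    exact covMatrix_of_measurePreserving_add_smul hP.isConvexBody.1 hg_memLp h_compact h_uncorr
      (measurePreserving_cond h_preserving h_compact.measurableSet h_preimage)
  have h_trace : (Matrix.vecMulVec n n : Matrix (Fin d) (Fin d) ℝ).trace = 1 := by
    rw [Matrix.trace_vecMulVec, dotProduct, ← inner_eq_sum_mul, real_inner_self_eq_norm_sq, hn,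
      one_pow]
  have h_psd : (Var[g; volume[|P]] • Matrix.vecMulVec n n : Matrix (Fin d) (Fin d) ℝ).PosSemidef :=
    (Matrix.posSemidef_vecMulVec_self_star (n : Fin d → ℝ)).smul (variance_nonneg g _)
  have h_le : 1 + Var[g; volume[|P]] ≤ (covMatrix (T '' P)).det := by
    have h := one_add_trace_le_det_one_add h_psd
    rwa [← h_cov, Matrix.trace_smul, h_trace, smul_eq_mul, mul_one] at h
  have h_max : (covMatrix (T '' P)).det ≤ 1 := by
    have h := hP.det_div_le _ h_body
    rwa [Measure.real, h_volume, ← Measure.real, div_le_div_iff_of_pos_right (by positivity)] at h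
  linarith [variance_nonneg g (volume[|P])]

theorem exists_affine_halfChord (h_symm : ∀ x ∈ P, (ℝ ∙ n)ᗮ.reflection x ∈ P) :
    ∃ (m : ℝ) (v : Euc d), ⟪v, n⟫ = 0 ∧ ∀ x ∈ P, halfChord P n x = m + ⟪v, x⟫ := by
  have h_compact := hP.isConvexBody.1
  have h_conv := hP.isConvexBody.2.1
  set v := covVector P (halfChord P n)
  have hv : ⟪v, n⟫ = 0 := inner_covVector_halfChord h_compact h_conv hn h_symm
  have h_memLp := memLp_halfChord h_compact h_conv hn h_symm
  have h_image := image_add_halfChord_smul_eq h_compact h_conv hn h_symm hv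
  have h_half_compact : IsCompact (P ∩ {x | 0 ≤ ⟪n, x⟫}) :=
    h_compact.inter_right (isClosed_le continuous_const (by fun_prop))
  have h_half_convex : Convex ℝ (P ∩ {x | 0 ≤ ⟪n, x⟫}) :=
    h_conv.inter (convex_halfSpace_ge (innerₛₗ ℝ n).isLinear 0)
  have h_inv : ∀ x (t : ℝ), ⟪v, x + t • n⟫ = ⟪v, x⟫ := fun x t => by
    rw [inner_add_right, inner_smul_right, hv, mul_zero, add_zero]
  have hg_memLp : MemLp (fun x => halfChord P n x - ⟪v, x⟫) 2 (volume[|P]) :=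
    h_memLp.sub (memLp_cond_of_isCompact h_compact (by fun_prop) 2)
  have h_var : Var[fun x => halfChord P n x - ⟪v, x⟫; volume[|P]] = 0 := by
    refine hP.variance_eq_zero_of_convex_image hn
      ((measurable_halfChord h_compact.measurableSet).sub (by fun_prop)) hg_memLp
      (fun x t => by rw [halfChord_add_smul, h_inv])
      (covariance_sub_inner_covVector h_compact h_memLp hP.isIsotropic.2) ?_ ?_
    · rw [h_image]
      exact h_half_compact.image (by fun_prop)
    · rw [h_image]
      exact h_half_convex.is_linear_image ⟨fun x y => by simp only [inner_add_right]; module,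
        fun c x => by simp only [inner_smul_right, smul_add, smul_smul, mul_sub]⟩
  have := hP.isProbabilityMeasure_cond
  set m := ∫ x, (halfChord P n x - ⟪v, x⟫) ∂volume[|P]
  refine ⟨m, v, hv, fun x hx => halfChord_eq_of_ae_eq h_compact h_conv hn h_symm
    hP.isConvexBody.2.2 (f := fun y => m + ⟪v, y⟫) (by fun_prop) (fun y t => by rw [h_inv]) ?_ hx⟩
  filter_upwards [ae_eq_integral_of_variance_eq_zero hg_memLp h_var] with y hy
  exact (sub_eq_iff_eq_add.1 hy)

end IsIsotropicMaximizer

end Symmetrization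

section Conclusion

theorem IsVectorBasis.exists_unit_normal {E : Type*} [NormedAddCommGroup E] [InnerProductSpace ℝ E]
    [FiniteDimensional ℝ E] [DecidableEq E] {B : Finset E} {r : E} (hB : IsVectorBasis B)
    (hr : r ∈ B) :
    ∃ n : E, ‖n‖ = 1 ∧ 0 < ⟪n, r⟫ ∧ Submodule.span ℝ (↑(B.erase r) : Set E) = (ℝ ∙ n)ᗮ := by
  have hr_notMem : r ∉ Submodule.span ℝ (↑(B.erase r) : Set E) := by
    have h_indep : LinearIndepOn ℝ id (B : Set E) := hB.linearIndependent
    simpa using h_indep.notMem_span hr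
  obtain ⟨y, hy, z, hz, h_eq⟩ :=
    (Submodule.span ℝ (↑(B.erase r) : Set E)).exists_add_mem_mem_orthogonal r
  have hz_ne : z ≠ 0 := fun h => hr_notMem <| by
    rw [h, add_zero] at h_eq
    exact h_eq ▸ hy
  have hz_inner : ⟪z, r⟫ = ‖z‖ ^ 2 := by
    rw [h_eq, inner_add_right, real_inner_comm, hz y hy, zero_add, real_inner_self_eq_norm_sq]
  have hz_pos : 0 < ‖z‖ := norm_pos_iff.2 hz_ne
  refine ⟨‖z‖⁻¹ • z, norm_smul_inv_norm hz_ne, ?_,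
    hB.span_erase_eq_orthogonal hr (smul_ne_zero (inv_ne_zero hz_pos.ne') hz_ne) fun u hu => ?_⟩
  · rw [real_inner_smul_left, hz_inner]
    positivity
  · rw [real_inner_smul_left, real_inner_comm, hz u (Submodule.subset_span hu), mul_zero]

theorem halfChord_eq_abs_inner_of_mem_extremePoints {E : Type*} [NormedAddCommGroup E]
    [InnerProductSpace ℝ E] {P : Set E} {n w : E} (hP : IsCompact P) (h_conv : Convex ℝ P)
    (hn : ‖n‖ = 1) (h_symm : ∀ x ∈ P, (ℝ ∙ n)ᗮ.reflection x ∈ P) (hw : w ∈ P.extremePoints ℝ) :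
    halfChord P n w = |⟪n, w⟫| := by
  have h_le := abs_inner_le_halfChord hP h_conv hn h_symm hw.1
  refine le_antisymm (not_lt.1 fun h_lt => ?_) h_le
  have h_pos := (abs_nonneg _).trans_lt h_lt
  obtain ⟨h_lower, h_upper⟩ := abs_lt.1 h_lt
  have h_end : ∀ s : ℝ, |s| = halfChord P n w → w + (s - ⟪n, w⟫) • n ∈ P := fun s hs =>
    add_smul_mem_of_abs_le_halfChord hP h_conv hn h_symm hw.1 hs.le
  have h_seg : w ∈ openSegment ℝ (w + (halfChord P n w - ⟪n, w⟫) • n)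
      (w + (-halfChord P n w - ⟪n, w⟫) • n) := by
    refine ⟨(halfChord P n w + ⟪n, w⟫) / (2 * halfChord P n w),
      (halfChord P n w - ⟪n, w⟫) / (2 * halfChord P n w),
      div_pos (by linarith) (by linarith), div_pos (by linarith) (by linarith),
      by field_simp; ring, ?_⟩
    match_scalars <;> field_simp <;> ring
  have h_top := hw.2 (h_end _ (abs_of_pos h_pos)) (h_end _ (by rw [abs_neg, abs_of_pos h_pos]))
    h_seg
  have h_inner := congrArg (fun x => ⟪n, x⟫) h_top
  simp only [inner_add_smul_self hn] at h_inner
  linarith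

theorem eq_convexHull_of_extremePoints_subset {E : Type*} [NormedAddCommGroup E] [NormedSpace ℝ E]
    {P : Set E} (hP : IsCompact P) (h_conv : Convex ℝ P) {S : Finset E} (hS : (S : Set E) ⊆ P)
    (h_ext : P.extremePoints ℝ ⊆ convexHull ℝ (S : Set E)) : P = convexHull ℝ (S : Set E) := by
  refine subset_antisymm ?_ (convexHull_min hS h_conv)
  rw [← closure_convexHull_extremePoints hP h_conv]
  exact closure_minimal (convexHull_min h_ext (convex_convexHull ℝ _))
    (S.finite_toSet.isCompact_convexHull ℝ).isClosed

theorem isSimplexWith_of_eq_convexHull {V : Type*} [NormedAddCommGroup V] [NormedSpace ℝ V]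
    [FiniteDimensional ℝ V] {P : Set V} {S : Finset V} (hP : P = convexHull ℝ (S : Set V))
    (h_int : (interior P).Nonempty) (h_card : S.card ≤ Module.finrank ℝ V + 1) :
    IsSimplexWith (Module.finrank ℝ V + 1) P := by
  rw [hP, interior_convexHull_nonempty_iff_affineSpan_eq_top] at h_int
  have h_range : Set.range ((↑) : S → V) = S := Subtype.range_coe
  have h_finrank : Module.finrank ℝ (vectorSpan ℝ (Set.range ((↑) : S → V)))
      = Module.finrank ℝ V := by
    rw [h_range, ← direction_affineSpan, h_int, AffineSubspace.direction_top, finrank_top]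
  obtain ⟨k, hk⟩ : ∃ k, S.card = k + 1 := Nat.exists_eq_succ_of_ne_zero fun h0 => by
    simp [Finset.card_eq_zero.1 h0] at h_int
  have h_le := finrank_vectorSpan_range_le ℝ ((↑) : S → V) (by rwa [Fintype.card_coe])
  obtain rfl : k = Module.finrank ℝ V := by omega
  refine ⟨(↑) ∘ (S.equivFinOfCardEq hk).symm, ?_, ?_⟩
  · exact (affineIndependent_equiv _).2 ((affineIndependent_iff_finrank_vectorSpan_eq ℝ _
      (by rwa [Fintype.card_coe])).2 h_finrank)
  · rw [EquivLike.range_comp, h_range, hP]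

section SimplicialAround

variable {E : Type*} [NormedAddCommGroup E] [InnerProductSpace ℝ E] [FiniteDimensional ℝ E]
  [DecidableEq E] {P : Set E} {𝓕 : Finset (Finset E)} (hP : IsSimplicialAround P 𝓕)
  {F : Finset E} {n v r w : E} {m : ℝ} (hF : F ∈ 𝓕) (hr : r ∈ F) (hn : ‖n‖ = 1)
  (h_pos : 0 < ⟪n, r⟫) (h_span : Submodule.span ℝ (↑(F.erase r) : Set E) = (ℝ ∙ n)ᗮ)
  (h_symm : ∀ x ∈ P, (ℝ ∙ n)ᗮ.reflection x ∈ P)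
  (h_half : ∀ x ∈ P, halfChord P n x = m + ⟪v, x⟫)
include hP hF hr hn h_pos h_span h_symm h_half

namespace IsSimplicialAround

/-- Both sides agree on the vertices `x ∈ F`: these are extreme points of `P`, hence endpoints of
their chords, that is `⟪n, x⟫ = m + ⟪v, x⟫`. -/
theorem inner_sub_inner_eq (x : E) : ⟪n - v, x⟫ = m * sumCoord F x := by
  have hF_base := hP.isFacetBase_of_mem F hF
  have h_nonneg : ∀ u ∈ F, 0 ≤ ⟪n, u⟫ := fun u hu => by
    rcases eq_or_ne u r with rfl | h_ne
    · exact h_pos.le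
    · exact (Submodule.mem_orthogonal_singleton_iff_inner_right.1
        (h_span ▸ Submodule.subset_span (Finset.mem_erase.2 ⟨h_ne, hu⟩))).ge
  have h_vertex : ∀ u ∈ F, ⟪n - v, u⟫ = m := fun u hu => by
    rw [inner_sub_left, sub_eq_iff_eq_add, ← h_half u (hF_base.subset hu),
      halfChord_eq_abs_inner_of_mem_extremePoints hP.isCompact hP.convex hn h_symm
        (hF_base.mem_extremePoints hP.convex hu), abs_of_nonneg (h_nonneg u hu)]
  have h_sum := hF_base.isVectorBasis.map_eq_sum (innerSL ℝ (n - v)) x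
  simp only [innerSL_apply_apply] at h_sum
  rw [h_sum, sumCoord_apply, Finset.mul_sum]
  exact Finset.sum_congr rfl fun u hu => by rw [h_vertex u hu, smul_eq_mul, mul_comm]

theorem mem_convexHull_insert_mirror (hv : ⟪v, n⟫ = 0) (hw : w ∈ P.extremePoints ℝ) :
    w ∈ convexHull ℝ (↑(insert (mirror F r r) F) : Set E) := by
  have hF_base := hP.isFacetBase_of_mem F hF
  have h_mirror : ∀ x, mirror F r x = (ℝ ∙ n)ᗮ.reflection x := fun x => by
    simp only [mirror, h_span]
  have h_eq := hP.inner_sub_inner_eq hF hr hn h_pos h_span h_symm h_half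
  have hm : m ≠ 0 := fun h0 => by
    have h := h_eq n
    rw [inner_sub_left, hv, real_inner_self_eq_norm_sq, hn, h0] at h
    norm_num at h
  have h_contact : ∀ x ∈ P, ⟪n, x⟫ - ⟪v, x⟫ = m → x ∈ convexHull ℝ (F : Set E) := fun x hx h => by
    rw [← inner_sub_left, h_eq] at h
    exact hF_base.contact_eq hP.convex ▸ ⟨hx, mul_eq_left₀ hm |>.1 h⟩
  have h_abs : |⟪n, w⟫| = m + ⟪v, w⟫ := by
    rw [← h_half w hw.1,
      halfChord_eq_abs_inner_of_mem_extremePoints hP.isCompact hP.convex hn h_symm hw]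
  rcases le_total 0 ⟪n, w⟫ with h_sign | h_sign
  · rw [abs_of_nonneg h_sign] at h_abs
    exact convexHull_mono (Finset.coe_subset.2 (Finset.subset_insert _ F))
      (h_contact w hw.1 (sub_eq_iff_eq_add.2 h_abs))
  · have h_reflect : mirror F r w ∈ convexHull ℝ (F : Set E) := by
      rw [abs_of_nonpos h_sign] at h_abs
      rw [h_mirror]
      refine h_contact _ (h_symm w hw.1) ?_
      rw [reflection_orthogonal_singleton_apply hn, sub_eq_add_neg w, ← neg_smul,
        inner_add_smul_self hn, inner_add_right, inner_smul_right, hv]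
      linarith
    have h_image : w ∈ mirror F r '' convexHull ℝ (F : Set E) :=
      ⟨_, h_reflect, Submodule.reflection_reflection _ w⟩
    have h_image_convexHull : mirror F r '' convexHull ℝ (F : Set E)
        = convexHull ℝ (↑(insert (mirror F r r) (F.erase r)) : Set E) := by
      rw [← image_mirror_eq_insert hr, Finset.coe_image]
      exact (mirror F r).toLinearEquiv.toLinearMap.image_convexHull _
    rw [h_image_convexHull] at h_image
    exact convexHull_mono (Finset.coe_subset.2
      (Finset.insert_subset_insert _ (Finset.erase_subset r F))) h_image

end IsSimplicialAround

end SimplicialAround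

theorem IsIsotropicMaximizer.isSimplexWith {d : ℕ} {P : Set (Euc d)} {𝓕 : Finset (Finset (Euc d))}
    (hP : IsIsotropicMaximizer P) (h𝓕 : IsSimplicialAround P 𝓕) (hd : 0 < d) :
    IsSimplexWith (d + 1) P := by
  classical
  obtain ⟨F, hF, -⟩ := h𝓕.exists_mem_vcone 0
  have h_card : F.card = d := by rw [h𝓕.card_eq_finrank hF, finrank_euclideanSpace_fin]
  obtain ⟨r, hr⟩ : F.Nonempty := Finset.card_pos.1 (by rwa [h_card])
  obtain ⟨n, hn, h_pos, h_span⟩ := (h𝓕.isVectorBasis hF).exists_unit_normal hr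
  have h_mirror : ∀ x ∈ P, mirror F r x ∈ P := fun x hx =>
    h𝓕.mirror_mem (fun B hB k hk => hP.vertex_equation h𝓕 hB hk) hF hr hx
  have h_symm : ∀ x ∈ P, (ℝ ∙ n)ᗮ.reflection x ∈ P := by simpa only [mirror, h_span] using h_mirror
  obtain ⟨m, v, hv, h_half⟩ := hP.exists_affine_halfChord hn h_symm
  have h_hull : P = convexHull ℝ (↑(insert (mirror F r r) F) : Set (Euc d)) := by
    refine eq_convexHull_of_extremePoints_subset h𝓕.isCompact h𝓕.convex ?_ fun w hw =>
      h𝓕.mem_convexHull_insert_mirror hF hr hn h_pos h_span h_symm h_half hv hw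
    rw [Finset.coe_insert]
    exact Set.insert_subset (h_mirror r (h𝓕.subset hF hr)) (h𝓕.subset hF)
  have h_card_le : (insert (mirror F r r) F).card ≤ Module.finrank ℝ (Euc d) + 1 := by
    rw [← h𝓕.card_eq_finrank hF]
    exact Finset.card_insert_le _ F
  simpa only [finrank_euclideanSpace_fin] using
    isSimplexWith_of_eq_convexHull h_hull hP.isConvexBody.2.2 h_card_le

end Conclusion

section AffineInvariance

section ContinuousAffineEquiv

variable {V : Type*} [NormedAddCommGroup V] [NormedSpace ℝ V] {n : ℕ} {P F : Set V}

theorem IsSimplexWith.image (hF : IsSimplexWith n F) (g : V ≃ᴬ[ℝ] V) :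
    IsSimplexWith n (g '' F) := by
  obtain ⟨w, hw, rfl⟩ := hF
  refine ⟨g ∘ w, hw.map' g.toAffineEquiv.toAffineMap g.injective, ?_⟩
  rw [Set.range_comp]
  exact g.toAffineEquiv.toAffineMap.image_convexHull _

theorem IsPolytope.image (hP : IsPolytope P) (g : V ≃ᴬ[ℝ] V) : IsPolytope (g '' P) := by
  classical
  obtain ⟨S, rfl⟩ := hP
  refine ⟨S.image g, ?_⟩
  rw [Finset.coe_image]
  exact g.toAffineEquiv.toAffineMap.image_convexHull _

theorem sdim_image (g : V ≃ᴬ[ℝ] V) (F : Set V) : sdim (g '' F) = sdim F := by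
  have h_span : affineSpan ℝ (g '' F) = (affineSpan ℝ F).map g.toAffineEquiv.toAffineMap :=
    (AffineSubspace.map_span g.toAffineEquiv.toAffineMap F).symm
  rw [sdim, sdim, h_span, AffineSubspace.map_direction]
  exact LinearEquiv.finrank_map_eq g.toAffineEquiv.linear _

theorem IsFacetOf.preimage {g : V ≃ᴬ[ℝ] V} (hF : IsFacetOf n (g '' P) F) :
    IsFacetOf n P (g ⁻¹' F) := by
  have h_image : g '' (g ⁻¹' F) = F := Set.image_preimage_eq F g.surjective
  refine ⟨fun h_nonempty => ?_, by rw [← sdim_image g, h_image, hF.2]⟩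
  obtain ⟨l, hl⟩ := hF.1 (h_image ▸ h_nonempty.image g)
  have h_sub (x y : V) :
      l (g x) - l (g y) = l.comp g.toContinuousAffineMap.contLinear (x - y) := by
    rw [← map_sub, ContinuousLinearMap.comp_apply]
    exact congrArg l (g.toContinuousAffineMap.contLinear_map_vsub x y).symm
  refine ⟨l.comp g.toContinuousAffineMap.contLinear, Set.ext fun x => ?_⟩
  simp only [hl, Set.mem_preimage, Set.mem_ofPred_eq, Set.forall_mem_image,
    g.injective.mem_set_image, ← sub_nonneg (a := l (g x)), h_sub, map_sub, sub_nonneg]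

theorem IsSimplicialPolytope.isSimplexWith_of_isFacetOf_image (hP : IsSimplicialPolytope n P)
    {g : V ≃ᴬ[ℝ] V} (hF : IsFacetOf n (g '' P) F) : IsSimplexWith n F := by
  rw [← Set.image_preimage_eq F g.surjective]
  exact (hP.2.2 _ hF.preimage).image g

theorem IsSimplicialPolytope.pos (hP : IsSimplicialPolytope n P) (h_nonempty : P.Nonempty) :
    0 < n := by
  refine Nat.pos_of_ne_zero ?_
  rintro rfl
  obtain ⟨w, -, hw⟩ := hP.2.2 P ⟨IsExposed.refl P, hP.2.1⟩
  simp [hw] at h_nonempty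

end ContinuousAffineEquiv

variable {d : ℕ} {K P : Set (Euc d)}

theorem IsConvexBody.det_div_le_of_isoConst_le (hK : IsConvexBody K) (hP : IsConvexBody P)
    (hd : 0 < d) (h_le : isoConst K ≤ isoConst P) :
    (covMatrix K).det / volume.real K ^ 2 ≤ (covMatrix P).det / volume.real P ^ 2 := by
  have h_nonneg {Q : Set (Euc d)} (hQ : IsConvexBody Q) :
      0 ≤ (covMatrix Q).det / volume.real Q ^ 2 :=
    div_nonneg (posDef_covMatrix hQ).det_pos.le (sq_nonneg _)
  exact (Real.rpow_le_rpow_iff (h_nonneg hK) (h_nonneg hP) (by positivity)).1 h_le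

theorem IsConvexBody.centroid_mem_interior (hK : IsConvexBody K) :
    _root_.centroid K ∈ interior K := by
  obtain ⟨y, hy⟩ := hK.2.2
  obtain ⟨ε, hε, h_ball⟩ :=
    Metric.nhds_basis_closedBall.mem_iff.1 (isOpen_interior.mem_nhds hy)
  have h_finite : IsFiniteMeasure (volume.restrict K) := ⟨by simpa using hK.1.measure_lt_top⟩
  have h_ball_pos : volume.restrict K (Metric.closedBall y ε) ≠ 0 := by
    rw [Measure.restrict_apply Metric.isClosed_closedBall.measurableSet,
      Set.inter_eq_left.2 (h_ball.trans interior_subset)]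
    exact (Metric.measure_closedBall_pos volume y hε).ne'
  have h_int : Integrable (fun x : Euc d => x) (volume.restrict K) :=
    continuous_id.continuousOn.integrableOn_compact hK.1
  have h_average : ⨍ x in Metric.closedBall y ε, x ∂volume.restrict K ∈ Metric.closedBall y ε :=
    (convex_closedBall y ε).set_average_mem Metric.isClosed_closedBall h_ball_pos
      (measure_ne_top _ _) (ae_restrict_mem Metric.isClosed_closedBall.measurableSet)
      h_int.integrableOn
  have h_centroid : _root_.centroid K = ⨍ x in K, x := (setAverage_eq _ _ _).symm
  rw [h_centroid]
  exact hK.2.1.average_mem_interior_of_set h_ball_pos (ae_restrict_mem hK.1.measurableSet) h_int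
    (h_ball h_average)

theorem IsConvexBody.exists_isIsotropicMaximizer_image (hP : IsConvexBody P) (hd : 0 < d)
    (h_max : ∀ K : Set (Euc d), IsConvexBody K → isoConst K ≤ isoConst P) :
    ∃ g : Euc d ≃ᴬ[ℝ] Euc d, IsIsotropicMaximizer (g '' P) := by
  obtain ⟨f, t, h_iso⟩ := exists_isIsotropic_image hP
  have h_image : f.toContinuousAffineEquiv.trans (.constVAdd ℝ (Euc d) t) '' P
      = (fun x => f x + t) '' P := Set.image_congr fun x _ => add_comm t (f x)
  refine ⟨f.toContinuousAffineEquiv.trans (.constVAdd ℝ (Euc d) t), ?_⟩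
  rw [h_image]
  refine ⟨hP.image_affine f t, h_iso, fun K hK => ?_⟩
  calc (covMatrix K).det / volume.real K ^ 2
      ≤ (covMatrix P).det / volume.real P ^ 2 :=
        hK.det_div_le_of_isoConst_le hP hd (h_max K hK)
    _ = 1 / volume.real ((fun x => f x + t) '' P) ^ 2 := by
        rw [← det_covMatrix_div_image_affine hP.1 hP.measureReal_pos f t, h_iso.2, Matrix.det_one]

theorem IsIsotropicMaximizer.exists_isSimplicialAround (hP : IsIsotropicMaximizer P) (hd : 0 < d)
    (h_poly : IsPolytope P) (h_simp : ∀ F : Set (Euc d), IsFacetOf d P F → IsSimplexWith d F) :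
    ∃ 𝓕, IsSimplicialAround P 𝓕 := by
  have h_finrank : Module.finrank ℝ (Euc d) = d := finrank_euclideanSpace_fin
  have : Nontrivial (Euc d) := Module.nontrivial_of_finrank_pos (R := ℝ) (by rwa [h_finrank])
  refine _root_.exists_isSimplicialAround h_poly ?_ (by rwa [h_finrank])
  exact hP.isIsotropic.1 ▸ hP.isConvexBody.centroid_mem_interior

end AffineInvariance

/-- If `P` is a `d`-dimensional simplicial polytope maximizing the isotropic
constant among all `d`-dimensional convex bodies, then `P` is a simplex (the convex hull of
`d + 1` affinely independent points). -/
theorem stmt2 {d : ℕ} (P : Set (Euc d)) (hbody : IsConvexBody P)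
    (hsimp : IsSimplicialPolytope d P)
    (hmax : ∀ K : Set (Euc d), IsConvexBody K → isoConst K ≤ isoConst P) :
    IsSimplexWith (d + 1) P := by
  have hd : 0 < d := hsimp.pos (hbody.2.2.mono interior_subset)
  obtain ⟨g, hg⟩ := hbody.exists_isIsotropicMaximizer_image hd hmax
  obtain ⟨𝓕, h𝓕⟩ := hg.exists_isSimplicialAround hd (hsimp.1.image g) fun F hF =>
    hsimp.isSimplexWith_of_isFacetOf_image hF
  have h_image : IsSimplexWith (d + 1) (g.symm '' (g '' P)) :=
    (hg.isSimplexWith h𝓕 hd).image g.symm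
  simpa only [Set.image_image, g.symm_apply_apply, Set.image_id'] using h_image

end
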